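/- arXiv:2004.05567 — 2 statements merged into one kernel-verified Lean document; each statement's English description precedes it below -/
import Mathlib

section
/- Let n ∈ ℕ with n ≥ 3, let p ∈ (0,2], let x ∈ ℝⁿ with |x| = 1 and let a ∈ ℝ. Then ∫_{S^{n-1}} |x - a z|^p dσ(z) = 1 + a² p (p+n-2) ∫₀¹ ∫₀ᵗ (r/t)^{n-1} ( ∫_{S^{n-1}} |x - a r z|^{p-2} dσ(z) ) dr dt, where the inner spherical integral of |x - a r z|^{p-2} is finite for every r. -/
open MeasureTheory Metric

/-- The normalized rotation-invariant (Haar) probability measure `σ` on the unit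
sphere `S^{n-1} ⊆ ℝⁿ`. -/
noncomputable def sphereHaar (n : ℕ) :
    Measure (sphere (0 : EuclideanSpace ℝ (Fin n)) 1) :=
  ((volume : Measure (EuclideanSpace ℝ (Fin n))).toSphere Set.univ)⁻¹ •
    (volume : Measure (EuclideanSpace ℝ (Fin n))).toSphere

/-!
Only the law of `u = ⟪x, z⟫` matters. Differentiating the rotation invariance of the sphere along
rotations in the planes containing `x` gives the integration by parts formula
`k ∫ u h(u) = ∫ (1 - u²) h'(u)` with `k = n - 1`. Write `q = 1 - 2su + s² = |x - sz|²` and let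
`m(s)` be the mean of `q ^ c`, where `c = p / 2`. In polar coordinates the Laplacian of
`|x - y| ^ p` splits into a radial part and an angular part; the latter has mean zero by the
integration by parts formula. Hence `(s ^ k m')' = p (p + k - 1) s ^ k M(s)`, with `M(s)` the mean
of `q ^ (c - 1)`, and integrating twice from `0` gives the claim.

The singularity at `s = 1` is harmless: `q ≥ 1 - u²` bounds `q ^ (c - 1)` uniformly in `s`, and
`(1 - u²) ^ e` is integrable for `2e > -k`. For the latter, integration by parts bounds the mean of
`(1 - u² + ε) ^ e` by a constant times that of `(1 - u² + ε) ^ (e + 1)`, uniformly in `ε`, and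
Fatou's lemma lets `ε` tend to `0`.
-/

open Set Filter Topology Function
open scoped RealInnerProductSpace Pointwise Interval ENNReal

theorem integral_sub_eq_intervalIntegral_integral {Y E : Type*} [MeasurableSpace Y]
    {ν : Measure Y} [SFinite ν] [NormedAddCommGroup E] [NormedSpace ℝ E] [CompleteSpace E]
    {f f' : ℝ → Y → E} {a b : ℝ} {g : Y → ℝ} (hfa : Integrable (f a) ν) (hfb : Integrable (f b) ν)
    (hf : ∀ᵐ y ∂ν, ∀ t ∈ uIcc a b, HasDerivAt (f · y) (f' t y) t)
    (hf' : AEStronglyMeasurable (uncurry f') ((volume.restrict (Ι a b)).prod ν))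
    (hbound : ∀ᵐ y ∂ν, ∀ t ∈ uIcc a b, ‖f' t y‖ ≤ g y) (hg : Integrable g ν) :
    ∫ y, f b y ∂ν - ∫ y, f a y ∂ν = ∫ t in a..b, ∫ y, f' t y ∂ν := by
  have : IsFiniteMeasure (volume.restrict (Ι a b)) := ⟨by simp⟩
  have hint : Integrable (uncurry f') ((volume.restrict (Ι a b)).prod ν) := by
    refine (hg.comp_snd _).mono' hf' ?_
    filter_upwards [Measure.quasiMeasurePreserving_snd.ae hbound,
      Measure.quasiMeasurePreserving_fst.ae (ae_restrict_mem measurableSet_uIoc)] with w hw ht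
    exact hw w.1 (uIoc_subset_uIcc ht)
  rw [intervalIntegral_integral_swap hint, ← integral_sub hfb hfa]
  refine integral_congr_ae ?_
  filter_upwards [hf, hint.prod_left_ae] with y hy hy'
  exact (intervalIntegral.integral_eq_sub_of_hasDerivAt hy
    (intervalIntegrable_iff.2 hy')).symm

theorem abs_le_of_mem_uIcc_zero {s a : ℝ} (hs : s ∈ uIcc 0 a) : |s| ≤ |a| := by
  simpa using abs_sub_left_of_mem_uIcc hs

theorem integrable_of_continuousOn_of_ae_mem {X E : Type*} [TopologicalSpace X] [T2Space X]
    [MeasurableSpace X] [OpensMeasurableSpace X] [NormedAddCommGroup E]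
    [SecondCountableTopologyEither X E] {μ : Measure X} [IsFiniteMeasure μ] {K : Set X}
    (hK : IsCompact K) (hμ : ∀ᵐ x ∂μ, x ∈ K) {f : X → E} (hf : ContinuousOn f K) :
    Integrable f μ := by
  rw [← Measure.restrict_eq_self_of_ae_mem hμ]
  exact hf.integrableOn_compact hK

theorem intervalIntegral_integral_div_pow_mul_eq (F : ℝ → ℝ) (k : ℕ) (a : ℝ) :
    ∫ s in 0..a, ∫ r in 0..s, (r / s) ^ k * F r =
      a ^ 2 * ∫ t in 0..1, ∫ r in 0..t, (r / t) ^ k * F (a * r) := by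
  rcases eq_or_ne a 0 with rfl | ha
  · simp
  have hinner (t : ℝ) : ∫ r in 0..a * t, (r / (a * t)) ^ k * F r =
      a * ∫ r in 0..t, (r / t) ^ k * F (a * r) := by
    simpa [mul_div_mul_left _ _ ha] using
      (intervalIntegral.mul_integral_comp_mul_left (a := 0) (b := t) (c := a)
        (f := fun r => (r / (a * t)) ^ k * F r)).symm
  have houter := intervalIntegral.mul_integral_comp_mul_left (a := 0) (b := 1) (c := a)
    (f := fun s => ∫ r in 0..s, (r / s) ^ k * F r)
  rw [mul_zero, mul_one] at houter
  rw [← houter, funext hinner, intervalIntegral.integral_const_mul]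
  ring

/-! ### Integration by parts on the sphere -/

section SphereHomeomorph

variable {E : Type*} [NormedAddCommGroup E] [NormedSpace ℝ E]

/-- The restriction of a linear isometry to the unit sphere. -/
def sphereHomeomorph (R : E ≃ₗᵢ[ℝ] E) : sphere (0 : E) 1 ≃ₜ sphere (0 : E) 1 :=
  R.toHomeomorph.subtype fun z => by simp

variable [MeasurableSpace E] [BorelSpace E]

theorem measurePreserving_sphereHomeomorph {μ : Measure E} (R : E ≃ₗᵢ[ℝ] E)
    (hR : MeasurePreserving R μ μ) :
    MeasurePreserving (sphereHomeomorph R) μ.toSphere μ.toSphere := by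
  refine ⟨(sphereHomeomorph R).measurable, Measure.ext fun s hs => ?_⟩
  have hcone : R ⁻¹' (Ioo (0 : ℝ) 1 • (Subtype.val '' s)) =
      Ioo (0 : ℝ) 1 • (Subtype.val '' (sphereHomeomorph R ⁻¹' s)) := by
    rw [← R.symm_symm, ← R.symm.image_eq_preimage_symm, R.symm_symm,
      ← (sphereHomeomorph R).image_symm, ← image2_smul, ← image2_smul,
      image_image2_distrib_right (map_smul R.symm), image_image, image_image]
    rfl
  rw [Measure.map_apply (sphereHomeomorph R).measurable hs, Measure.toSphere_apply' _ hs,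
    Measure.toSphere_apply' _ ((sphereHomeomorph R).measurable hs), ← hcone,
    hR.measure_preimage_emb R.toHomeomorph.measurableEmbedding]

theorem integral_eq_zero_of_hasDerivAt_comp_sphereHomeomorph [FiniteDimensional ℝ E]
    {ν : Measure (sphere (0 : E) 1)} [IsFiniteMeasure ν] {R : ℝ → E ≃ₗᵢ[ℝ] E}
    (hR : Continuous fun w : ℝ × E => R w.1 w.2)
    (hν : ∀ t, MeasurePreserving (sphereHomeomorph (R t)) ν ν) {F F' : sphere (0 : E) 1 → ℝ}
    (hF : Continuous F) (hF' : Continuous F')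
    (hd : ∀ z t, HasDerivAt (fun t => F (sphereHomeomorph (R t) z))
      (F' (sphereHomeomorph (R t) z)) t) :
    ∫ z, F' z ∂ν = 0 := by
  have hinv (φ : sphere (0 : E) 1 → ℝ) (t : ℝ) :
      ∫ z, φ (sphereHomeomorph (R t) z) ∂ν = ∫ z, φ z ∂ν :=
    (hν t).integral_comp (sphereHomeomorph (R t)).measurableEmbedding φ
  have hint (t : ℝ) : Integrable (fun z => F (sphereHomeomorph (R t) z)) ν :=
    Continuous.integrable_of_hasCompactSupport (by fun_prop) (.of_compactSpace _)
  have hcont : Continuous fun w : ℝ × sphere (0 : E) 1 => sphereHomeomorph (R w.1) w.2 :=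
    (hR.comp (by fun_prop : Continuous fun w : ℝ × sphere (0 : E) 1 => (w.1, (w.2 : E)))
      ).subtype_mk _
  obtain ⟨C, hC⟩ := isCompact_univ.exists_bound_of_continuousOn hF'.continuousOn
  have hftc := integral_sub_eq_intervalIntegral_integral (ν := ν) (a := 0) (b := 1)
    (f := fun t z => F (sphereHomeomorph (R t) z)) (f' := fun t z => F' (sphereHomeomorph (R t) z))
    (hint 0) (hint 1) (ae_of_all _ fun z t _ => hd z t) (hF'.comp hcont).aestronglyMeasurable
    (ae_of_all _ fun z t _ => hC _ (mem_univ _)) (integrable_const C)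
  simpa only [hinv, sub_self, intervalIntegral.integral_const, sub_zero, one_smul] using hftc.symm

end SphereHomeomorph

section InnerProductSpace

variable {E : Type*} [NormedAddCommGroup E] [InnerProductSpace ℝ E]

theorem exists_continuous_linearIsometryEquiv_hasDerivAt_inner {x y : E} (hx : ‖x‖ = 1)
    (hy : ‖y‖ = 1) (hxy : ⟪x, y⟫ = 0) :
    ∃ R : ℝ → E ≃ₗᵢ[ℝ] E, Continuous (fun w : ℝ × E => R w.1 w.2) ∧
      (∀ z t, HasDerivAt (fun t => ⟪x, R t z⟫) (-⟪y, R t z⟫) t) ∧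
      ∀ z t, HasDerivAt (fun t => ⟪y, R t z⟫) ⟪x, R t z⟫ t := by
  have hyx : ⟪y, x⟫ = 0 := by rw [real_inner_comm, hxy]
  have hxx : ⟪x, x⟫ = 1 := by simp [hx]
  have hyy : ⟪y, y⟫ = 1 := by simp [hy]
  -- Reflections in a rotating line replace rotations: they differ by a fixed isometry.
  let w (t : ℝ) : E := Real.cos (t / 2) • x + Real.sin (t / 2) • y
  have hw (t : ℝ) : ‖w t‖ ^ 2 = 1 := by
    rw [← real_inner_self_eq_norm_sq]
    simp only [w, inner_add_left, inner_add_right, real_inner_smul_left, real_inner_smul_right,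
      hxx, hyy, hxy, hyx]
    linear_combination Real.sin_sq_add_cos_sq (t / 2)
  let R (t : ℝ) : E ≃ₗᵢ[ℝ] E := (ℝ ∙ w t).reflection
  have hR (t : ℝ) (z : E) : R t z = (2 * ⟪w t, z⟫) • w t - z := by
    rw [Submodule.reflection_singleton_apply, RCLike.ofReal_real_eq_id, id, hw, div_one,
      two_smul, two_mul, add_smul]
  have hRx (t : ℝ) (z : E) : ⟪x, R t z⟫ = Real.cos t * ⟪x, z⟫ + Real.sin t * ⟪y, z⟫ := by
    obtain ⟨s, rfl⟩ : ∃ s, t = 2 * s := ⟨t / 2, by ring⟩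
    simp only [hR, w, mul_div_cancel_left₀ s two_ne_zero, Real.cos_two_mul, Real.sin_two_mul,
      inner_add_left, inner_add_right, inner_sub_right, real_inner_smul_left,
      real_inner_smul_right, hxx, hxy]
    ring
  have hRy (t : ℝ) (z : E) : ⟪y, R t z⟫ = Real.sin t * ⟪x, z⟫ - Real.cos t * ⟪y, z⟫ := by
    obtain ⟨s, rfl⟩ : ∃ s, t = 2 * s := ⟨t / 2, by ring⟩
    simp only [hR, w, mul_div_cancel_left₀ s two_ne_zero, Real.cos_two_mul, Real.sin_two_mul,
      inner_add_left, inner_add_right, inner_sub_right, real_inner_smul_left,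
      real_inner_smul_right, hyx, hyy]
    linear_combination (2 * ⟪y, z⟫) * Real.sin_sq_add_cos_sq s
  refine ⟨R, by simp only [hR, w]; fun_prop, fun z t => ?_, fun z t => ?_⟩ <;>
    simp only [hRx, hRy]
  · exact (((Real.hasDerivAt_cos t).mul_const _).add
      ((Real.hasDerivAt_sin t).mul_const _)).congr_deriv (by ring)
  · exact (((Real.hasDerivAt_sin t).mul_const _).sub
      ((Real.hasDerivAt_cos t).mul_const _)).congr_deriv (by ring)

theorem inner_mem_Icc_of_mem_sphere {x : E} (hx : ‖x‖ = 1) (z : sphere (0 : E) 1) :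
    ⟪x, (z : E)⟫ ∈ Icc (-1) 1 := by
  simpa [hx] using abs_le.1 (abs_real_inner_le_norm x (z : E))

section IsometryInvariant

variable [FiniteDimensional ℝ E] [MeasurableSpace E] [BorelSpace E] {ν : Measure (sphere (0 : E) 1)}
  [IsFiniteMeasure ν]

theorem integral_inner_mul_eq_integral_inner_sq_mul
    (hν : ∀ R : E ≃ₗᵢ[ℝ] E, MeasurePreserving (sphereHomeomorph R) ν ν) {x y : E} (hx : ‖x‖ = 1)
    (hy : ‖y‖ = 1) (hxy : ⟪x, y⟫ = 0) {h h' : ℝ → ℝ}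
    (hd : ∀ u ∈ Icc (-1 : ℝ) 1, HasDerivAt h (h' u) u) (hc : ContinuousOn h' (Icc (-1) 1)) :
    ∫ z, ⟪x, (z : E)⟫ * h ⟪x, (z : E)⟫ ∂ν = ∫ z, ⟪y, (z : E)⟫ ^ 2 * h' ⟪x, (z : E)⟫ ∂ν := by
  have hx_mem := inner_mem_Icc_of_mem_sphere hx
  obtain ⟨R, hR, hRx, hRy⟩ := exists_continuous_linearIsometryEquiv_hasDerivAt_inner hx hy hxy
  have hhx : Continuous fun z : sphere (0 : E) 1 => h ⟪x, (z : E)⟫ :=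
    ContinuousOn.comp_continuous (HasDerivAt.continuousOn hd) (by fun_prop) hx_mem
  have hhx' : Continuous fun z : sphere (0 : E) 1 => h' ⟪x, (z : E)⟫ :=
    hc.comp_continuous (by fun_prop) hx_mem
  have hu : Continuous fun z : sphere (0 : E) 1 => ⟪x, (z : E)⟫ * h ⟪x, (z : E)⟫ :=
    Continuous.mul (by fun_prop) hhx
  have hv : Continuous fun z : sphere (0 : E) 1 => ⟪y, (z : E)⟫ ^ 2 * h' ⟪x, (z : E)⟫ :=
    Continuous.mul (by fun_prop) hhx'
  have hint {φ : sphere (0 : E) 1 → ℝ} (hφ : Continuous φ) : Integrable φ ν :=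
    hφ.integrable_of_hasCompactSupport (.of_compactSpace φ)
  rw [← sub_eq_zero, ← integral_sub (hint hu) (hint hv)]
  refine integral_eq_zero_of_hasDerivAt_comp_sphereHomeomorph hR (fun t => hν (R t))
    (F := fun z => h ⟪x, (z : E)⟫ * ⟪y, (z : E)⟫) (hhx.mul (by fun_prop)) (hu.sub hv) fun z t => ?_
  refine (((hd _ (hx_mem (sphereHomeomorph (R t) z))).comp t (hRx z t)).mul
    (hRy z t)).congr_deriv ?_
  change h' ⟪x, R t z⟫ * -⟪y, R t z⟫ * ⟪y, R t z⟫ + h ⟪x, R t z⟫ * ⟪x, R t z⟫ =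
    ⟪x, R t z⟫ * h ⟪x, R t z⟫ - ⟪y, R t z⟫ ^ 2 * h' ⟪x, R t z⟫
  ring

theorem mul_integral_inner_mul_eq_integral_one_sub_inner_sq_mul
    (hν : ∀ R : E ≃ₗᵢ[ℝ] E, MeasurePreserving (sphereHomeomorph R) ν ν) {k : ℕ}
    (hk : Module.finrank ℝ E = k + 1) {x : E} (hx : ‖x‖ = 1) {h h' : ℝ → ℝ}
    (hd : ∀ u ∈ Icc (-1 : ℝ) 1, HasDerivAt h (h' u) u) (hc : ContinuousOn h' (Icc (-1) 1)) :
    k * ∫ z, ⟪x, (z : E)⟫ * h ⟪x, (z : E)⟫ ∂ν =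
      ∫ z, (1 - ⟪x, (z : E)⟫ ^ 2) * h' ⟪x, (z : E)⟫ ∂ν := by
  obtain ⟨b, hb⟩ := Orthonormal.exists_orthonormalBasis_extension_of_card_eq (𝕜 := ℝ)
    (ι := Fin (k + 1)) (by simpa using hk) (v := fun _ => x) (s := {0})
    ⟨fun _ => hx, fun i j hij => (hij (Subsingleton.elim i j)).elim⟩
  obtain rfl : b 0 = x := hb 0 rfl
  have hsum (z : sphere (0 : E) 1) :
      ∑ i : Fin k, ⟪b i.succ, (z : E)⟫ ^ 2 = 1 - ⟪b 0, (z : E)⟫ ^ 2 := by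
    have hz := b.sum_sq_inner_right (z : E)
    rw [Fin.sum_univ_succ, norm_eq_of_mem_sphere z] at hz
    linarith
  have hint (i : Fin k) :
      Integrable (fun z : sphere (0 : E) 1 => ⟪b i.succ, (z : E)⟫ ^ 2 * h' ⟪b 0, (z : E)⟫) ν :=
    (Continuous.mul (by fun_prop) (hc.comp_continuous (by fun_prop)
      (inner_mem_Icc_of_mem_sphere hx))).integrable_of_hasCompactSupport (.of_compactSpace _)
  calc k * ∫ z, ⟪b 0, (z : E)⟫ * h ⟪b 0, (z : E)⟫ ∂ν
      = ∑ _i : Fin k, ∫ z, ⟪b 0, (z : E)⟫ * h ⟪b 0, (z : E)⟫ ∂ν := by simp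
    _ = ∑ i : Fin k, ∫ z, ⟪b i.succ, (z : E)⟫ ^ 2 * h' ⟪b 0, (z : E)⟫ ∂ν := by
        refine Finset.sum_congr rfl fun i _ => ?_
        exact integral_inner_mul_eq_integral_inner_sq_mul hν hx (b.norm_eq_one _)
          (b.orthonormal.2 (Fin.succ_ne_zero i).symm) hd hc
    _ = ∫ z, (1 - ⟪b 0, (z : E)⟫ ^ 2) * h' ⟪b 0, (z : E)⟫ ∂ν := by
        rw [← integral_finsetSum _ fun i _ => hint i]
        simp only [← Finset.sum_mul, hsum]

end IsometryInvariant

end InnerProductSpace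

/-! ### Powers of the distance -/

theorem one_sub_sq_nonneg {u : ℝ} (hu : u ∈ Icc (-1) 1) : 0 ≤ 1 - u ^ 2 := by
  nlinarith [hu.1, hu.2]

section OneSubSqAdd

variable {ε u : ℝ}

theorem one_sub_sq_add_pos (hε : 0 < ε) (hu : u ∈ Icc (-1) 1) : 0 < 1 - u ^ 2 + ε :=
  add_pos_of_nonneg_of_pos (one_sub_sq_nonneg hu) hε

theorem continuousOn_one_sub_sq_add_rpow (hε : 0 < ε) (e : ℝ) :
    ContinuousOn (fun u : ℝ => (1 - u ^ 2 + ε) ^ e) (Icc (-1) 1) :=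
  ContinuousOn.rpow_const (by fun_prop) fun _ hu => Or.inl (one_sub_sq_add_pos hε hu).ne'

theorem one_sub_sq_mul_rpow_le (hε : 0 < ε) (hu : u ∈ Icc (-1) 1) (e : ℝ) :
    (1 - u ^ 2) * (1 - u ^ 2 + ε) ^ e ≤ (1 - u ^ 2 + ε) ^ (e + 1) := by
  have := one_sub_sq_add_pos hε hu
  rw [Real.rpow_add_one this.ne', mul_comm]
  gcongr
  exact le_add_of_nonneg_right hε.le

end OneSubSqAdd

/-- The squared distance between a unit vector `x` and the multiple `s • z` of a unit vector `z`,
as a function of `s` and `u = ⟪x, z⟫`. -/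
def sqDist (s u : ℝ) : ℝ := 1 - 2 * s * u + s ^ 2

section SqDist

variable {s S u : ℝ}

theorem sqDist_eq_sub_sq_add_one_sub_sq (s u : ℝ) : sqDist s u = (s - u) ^ 2 + (1 - u ^ 2) := by
  rw [sqDist]
  ring

theorem one_sub_sq_le_sqDist (s u : ℝ) : 1 - u ^ 2 ≤ sqDist s u := by
  rw [sqDist_eq_sub_sq_add_one_sub_sq]
  exact le_add_of_nonneg_left (sq_nonneg _)

theorem sqDist_pos (hu : 0 < 1 - u ^ 2) (s : ℝ) : 0 < sqDist s u :=
  hu.trans_le (one_sub_sq_le_sqDist s u)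

theorem sqDist_pos_of_sq_ne_one (hs : s ^ 2 ≠ 1) (hu : u ∈ Icc (-1) 1) : 0 < sqDist s u := by
  refine lt_of_le_of_ne ((one_sub_sq_nonneg hu).trans (one_sub_sq_le_sqDist s u)) fun h => hs ?_
  rw [sqDist_eq_sub_sq_add_one_sub_sq] at h
  have hsu : s - u = 0 := pow_eq_zero_iff two_ne_zero |>.1
    (by nlinarith [one_sub_sq_nonneg hu, sq_nonneg (s - u)])
  rw [sub_eq_zero.1 hsu] at h ⊢
  linarith

theorem sqDist_rpow_le (hs : |s| ≤ S) (hu : 0 < 1 - u ^ 2) (e : ℝ) :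
    sqDist s u ^ e ≤ (1 - u ^ 2) ^ e + ((1 + S) ^ 2) ^ e := by
  have hq := sqDist_pos hu s
  rcases le_total e 0 with he | he
  · exact (Real.rpow_le_rpow_of_nonpos hu (one_sub_sq_le_sqDist s u) he).trans
      (le_add_of_nonneg_right (by positivity))
  · refine (Real.rpow_le_rpow hq.le ?_ he).trans (le_add_of_nonneg_left (by positivity))
    obtain ⟨hs₁, hs₂⟩ := abs_le.1 hs
    rw [sqDist]
    nlinarith [abs_le_of_sq_le_sq' (by linarith : u ^ 2 ≤ 1 ^ 2) zero_le_one]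

theorem hasDerivAt_sqDist_rpow (c : ℝ) (hq : sqDist s u ≠ 0) :
    HasDerivAt (fun s => sqDist s u ^ c) (2 * c * (s - u) * sqDist s u ^ (c - 1)) s := by
  have h : HasDerivAt (fun s => sqDist s u) (2 * (s - u)) s :=
    ((((hasDerivAt_id s).const_mul 2).mul_const u).const_sub 1 |>.add (hasDerivAt_pow 2 s)
      ).congr_deriv (by norm_num; ring)
  exact (h.rpow_const (Or.inl hq)).congr_deriv (by ring)

theorem abs_deriv_sqDist_rpow_le (c s : ℝ) (hu : 0 < 1 - u ^ 2) :
    |2 * c * (s - u) * sqDist s u ^ (c - 1)| ≤ 2 * |c| * (|s| + 1) * sqDist s u ^ (c - 1) := by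
  have hq := Real.rpow_pos_of_pos (sqDist_pos hu s) (c - 1)
  have hu₁ : |u| ≤ 1 := (sq_le_one_iff_abs_le_one u).1 (by linarith)
  simp only [abs_mul, Nat.abs_ofNat, abs_of_pos hq]
  gcongr
  exact (abs_sub s u).trans (by gcongr)

theorem hasDerivAt_sqDist_rpow_right (c : ℝ) (hq : sqDist s u ≠ 0) :
    HasDerivAt (fun u => sqDist s u ^ c) (-(2 * c * s) * sqDist s u ^ (c - 1)) u := by
  have h : HasDerivAt (fun u => sqDist s u) (-(2 * s)) u :=
    (((hasDerivAt_id u).const_mul (2 * s)).const_sub 1 |>.add_const (s ^ 2)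
      ).congr_deriv (by simp)
  exact (h.rpow_const (Or.inl hq)).congr_deriv (by ring)

theorem measurable_sqDist_rpow (c : ℝ) : Measurable fun w : ℝ × ℝ => sqDist w.1 w.2 ^ c := by
  unfold sqDist
  fun_prop

/-- Up to the factor `2 * c * s`, the ultraspherical operator `(1 - u²) ∂ᵤ² - k u ∂ᵤ` applied to
`sqDist s u ^ c`, that is, `s²` times the angular part of the Laplacian of `y ↦ ‖x - y‖ ^ (2 * c)`
on `ℝ^(k + 1)` at distance `s` from the origin. -/
noncomputable def angularPart (k : ℕ) (c s u : ℝ) : ℝ :=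
  k * (u * sqDist s u ^ (c - 1)) + 2 * (c - 1) * s * ((1 - u ^ 2) * sqDist s u ^ (c - 2))

theorem measurable_angularPart (k : ℕ) (c : ℝ) :
    Measurable fun w : ℝ × ℝ => angularPart k c w.1 w.2 := by
  have := measurable_sqDist_rpow
  unfold angularPart
  fun_prop

theorem abs_angularPart_le (k : ℕ) (c s : ℝ) (hu : 0 < 1 - u ^ 2) :
    |angularPart k c s u| ≤ (k + 2 * |c - 1| * |s|) * sqDist s u ^ (c - 1) := by
  have hq := sqDist_pos hu s
  have hu₁ : |u| ≤ 1 := (sq_le_one_iff_abs_le_one u).1 (by linarith)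
  have hle : (1 - u ^ 2) * sqDist s u ^ (c - 2) ≤ sqDist s u ^ (c - 1) := by
    rw [show c - 1 = c - 2 + 1 by ring, Real.rpow_add_one hq.ne', mul_comm]
    gcongr
    exact one_sub_sq_le_sqDist s u
  calc |angularPart k c s u|
      ≤ |k * (u * sqDist s u ^ (c - 1))| +
          |2 * (c - 1) * s * ((1 - u ^ 2) * sqDist s u ^ (c - 2))| := abs_add_le _ _
    _ = k * (|u| * sqDist s u ^ (c - 1)) +
          2 * |c - 1| * |s| * ((1 - u ^ 2) * sqDist s u ^ (c - 2)) := by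
        simp only [abs_mul, Nat.abs_cast, Nat.abs_ofNat, abs_of_pos hu,
          abs_of_pos (Real.rpow_pos_of_pos hq _)]
    _ ≤ k * (1 * sqDist s u ^ (c - 1)) + 2 * |c - 1| * |s| * sqDist s u ^ (c - 1) := by gcongr
    _ = (k + 2 * |c - 1| * |s|) * sqDist s u ^ (c - 1) := by ring

theorem abs_pow_mul_sub_angularPart_le (k : ℕ) (c s : ℝ) (hu : 0 < 1 - u ^ 2) :
    |2 * c * (2 * c + k - 1) * (s ^ k * sqDist s u ^ (c - 1)) -
        2 * c * s ^ (k - 1) * angularPart k c s u| ≤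
      (|2 * c * (2 * c + k - 1)| * |s| ^ k +
        |2 * c| * |s| ^ (k - 1) * (k + 2 * |c - 1| * |s|)) * sqDist s u ^ (c - 1) := by
  have hq := Real.rpow_pos_of_pos (sqDist_pos hu s) (c - 1)
  refine (abs_sub _ _).trans ?_
  rw [add_mul, mul_assoc _ (|s| ^ k), mul_assoc _ _ (sqDist s u ^ (c - 1))]
  gcongr
  · rw [abs_mul, abs_mul (s ^ k), abs_pow, abs_of_pos hq]
  · rw [abs_mul, abs_mul _ (s ^ (k - 1)), abs_pow]
    gcongr
    exact abs_angularPart_le k c s hu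

theorem hasDerivAt_pow_mul_deriv_sqDist_rpow {k : ℕ} (hk : k ≠ 0) (c : ℝ) (hq : sqDist s u ≠ 0) :
    HasDerivAt (fun s => s ^ k * (2 * c * (s - u) * sqDist s u ^ (c - 1)))
      (2 * c * (2 * c + k - 1) * (s ^ k * sqDist s u ^ (c - 1)) -
        2 * c * s ^ (k - 1) * angularPart k c s u) s := by
  obtain ⟨j, rfl⟩ := Nat.exists_eq_succ_of_ne_zero hk
  have hpow : sqDist s u ^ (c - 1) = sqDist s u ^ (c - 2) * sqDist s u := by
    rw [← Real.rpow_add_one hq]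
    ring_nf
  have hd := hasDerivAt_sqDist_rpow (c - 1) hq
  rw [show c - 1 - 1 = c - 2 by ring] at hd
  refine ((hasDerivAt_pow (j + 1) s).mul
    ((((hasDerivAt_id s).sub_const u).const_mul (2 * c)).mul hd)).congr_deriv ?_
  simp only [angularPart, hpow, id, Pi.mul_apply, Nat.succ_eq_add_one, Nat.add_sub_cancel]
  rw [sqDist]
  push_cast
  ring

end SqDist

/-! ### Ultraspherical measures -/

/-- A measure on `[-1, 1]` satisfying the integration by parts formula of the ultraspherical
(Gegenbauer) weight `(1 - u²) ^ (k / 2 - 1)`. For `k ≥ 1` the law of a coordinate of a uniform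
random point of the sphere `S^k` is of this kind. -/
structure IsUltraspherical (k : ℕ) (μ : Measure ℝ) : Prop where
  ae_mem_Icc : ∀ᵐ u ∂μ, u ∈ Icc (-1) 1
  mul_integral_mul_eq : ∀ h h' : ℝ → ℝ, (∀ u ∈ Icc (-1) 1, HasDerivAt h (h' u) u) →
    ContinuousOn h' (Icc (-1) 1) → k * ∫ u, u * h u ∂μ = ∫ u, (1 - u ^ 2) * h' u ∂μ

namespace IsUltraspherical

variable {k : ℕ} {μ : Measure ℝ} [IsFiniteMeasure μ] {c e s ε : ℝ}

theorem integrable_of_continuousOn (hμ : IsUltraspherical k μ) {f : ℝ → ℝ}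
    (hf : ContinuousOn f (Icc (-1) 1)) : Integrable f μ :=
  integrable_of_continuousOn_of_ae_mem isCompact_Icc hμ.ae_mem_Icc hf

theorem mul_integral_sq_mul_rpow_le_integral_rpow_add_one (hμ : IsUltraspherical k μ)
    (he : e ≤ 0) (hε : 0 < ε) :
    (k + 2 * e) * ∫ u, u ^ 2 * (1 - u ^ 2 + ε) ^ e ∂μ ≤ ∫ u, (1 - u ^ 2 + ε) ^ (e + 1) ∂μ := by
  have hc (b : ℝ) := continuousOn_one_sub_sq_add_rpow hε b
  have hint := hμ.integrable_of_continuousOn (hc (e + 1))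
  have hint_sq : Integrable (fun u : ℝ => u ^ 2 * (1 - u ^ 2 + ε) ^ e) μ :=
    hμ.integrable_of_continuousOn (ContinuousOn.mul (by fun_prop) (hc e))
  have hd (u : ℝ) (hu : u ∈ Icc (-1) 1) : HasDerivAt (fun u : ℝ => u * (1 - u ^ 2 + ε) ^ e)
      ((1 - u ^ 2 + ε) ^ e - 2 * e * u ^ 2 * (1 - u ^ 2 + ε) ^ (e - 1)) u :=
    ((hasDerivAt_id u).mul ((((hasDerivAt_pow 2 u).const_sub 1).add_const ε).rpow_const
      (Or.inl (one_sub_sq_add_pos hε hu).ne'))).congr_deriv (by simp; ring)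
  have hc' : ContinuousOn (fun u : ℝ =>
      (1 - u ^ 2 + ε) ^ e - 2 * e * u ^ 2 * (1 - u ^ 2 + ε) ^ (e - 1)) (Icc (-1) 1) :=
    (hc e).sub (ContinuousOn.mul (by fun_prop) (hc (e - 1)))
  have hibp := hμ.mul_integral_mul_eq _ _ hd hc'
  have hmono : ∫ u, (1 - u ^ 2) * ((1 - u ^ 2 + ε) ^ e -
        2 * e * u ^ 2 * (1 - u ^ 2 + ε) ^ (e - 1)) ∂μ ≤
      ∫ u, ((1 - u ^ 2 + ε) ^ (e + 1) - 2 * e * (u ^ 2 * (1 - u ^ 2 + ε) ^ e)) ∂μ := by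
    refine integral_mono_ae (hμ.integrable_of_continuousOn
      (ContinuousOn.mul (by fun_prop) hc')) (hint.sub (hint_sq.const_mul _)) ?_
    filter_upwards [hμ.ae_mem_Icc] with u hu
    have hle := one_sub_sq_mul_rpow_le hε hu (e - 1)
    rw [sub_add_cancel] at hle
    have := mul_le_mul_of_nonneg_left hle (by nlinarith : 0 ≤ -2 * e * u ^ 2)
    linarith [one_sub_sq_mul_rpow_le hε hu e]
  rw [integral_sub hint (hint_sq.const_mul _), integral_const_mul, ← hibp] at hmono
  simp only [← mul_assoc, ← sq] at hmono ⊢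
  linarith

theorem integral_rpow_le_mul_integral_rpow_add_one (hμ : IsUltraspherical k μ) (he : e ≤ 0)
    (hke : -k < 2 * e) (hε : 0 < ε) :
    ∫ u, (1 - u ^ 2 + ε) ^ e ∂μ ≤
      (1 + (k + 2 * e)⁻¹) * ∫ u, (1 - u ^ 2 + ε) ^ (e + 1) ∂μ := by
  have hc (b : ℝ) := continuousOn_one_sub_sq_add_rpow hε b
  have hint := hμ.integrable_of_continuousOn (hc (e + 1))
  have hint_sq : Integrable (fun u : ℝ => u ^ 2 * (1 - u ^ 2 + ε) ^ e) μ :=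
    hμ.integrable_of_continuousOn (ContinuousOn.mul (by fun_prop) (hc e))
  calc ∫ u, (1 - u ^ 2 + ε) ^ e ∂μ
      ≤ ∫ u, ((1 - u ^ 2 + ε) ^ (e + 1) + u ^ 2 * (1 - u ^ 2 + ε) ^ e) ∂μ := by
        refine integral_mono_ae (hμ.integrable_of_continuousOn (hc e)) (hint.add hint_sq) ?_
        filter_upwards [hμ.ae_mem_Icc] with u hu
        linarith [one_sub_sq_mul_rpow_le hε hu e]
    _ = ∫ u, (1 - u ^ 2 + ε) ^ (e + 1) ∂μ + ∫ u, u ^ 2 * (1 - u ^ 2 + ε) ^ e ∂μ :=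
        integral_add hint hint_sq
    _ ≤ (1 + (k + 2 * e)⁻¹) * ∫ u, (1 - u ^ 2 + ε) ^ (e + 1) ∂μ := by
        rw [add_mul, one_mul]
        gcongr
        rw [le_inv_mul_iff₀ (by linarith)]
        exact hμ.mul_integral_sq_mul_rpow_le_integral_rpow_add_one he hε

theorem exists_integral_rpow_le (hμ : IsUltraspherical k μ) (hke : -k < 2 * e) :
    ∃ C, ∀ ε ∈ Ioc (0 : ℝ) 1, ∫ u, (1 - u ^ 2 + ε) ^ e ∂μ ≤ C := by
  obtain ⟨m, hm⟩ := exists_nat_ge (-e)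
  induction m generalizing e with
  | zero =>
    rw [Nat.cast_zero] at hm
    refine ⟨∫ _, 2 ^ e ∂μ, fun ε hε => integral_mono_of_nonneg ?_ (integrable_const _) ?_⟩
    all_goals
      filter_upwards [hμ.ae_mem_Icc] with u hu
      have hu' := one_sub_sq_nonneg hu
    · exact Real.rpow_nonneg (by linarith [hε.1]) e
    · exact Real.rpow_le_rpow (by linarith [hε.1]) (by nlinarith [hε.2]) (by linarith)
  | succ m ih =>
    push_cast at hm
    rcases le_total 0 e with he | he
    · exact ih hke (by linarith [m.cast_nonneg (α := ℝ)])
    · obtain ⟨C, hC⟩ := ih (e := e + 1) (by linarith) (by linarith)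
      refine ⟨(1 + (k + 2 * e)⁻¹) * C, fun ε hε => ?_⟩
      have : 0 ≤ k + 2 * e := by linarith
      exact (hμ.integral_rpow_le_mul_integral_rpow_add_one he hke hε.1).trans
        (by gcongr; exact hC ε hε)

theorem lintegral_ofReal_one_sub_sq_rpow_lt_top (hμ : IsUltraspherical k μ) (hke : -k < 2 * e) :
    ∫⁻ u, ENNReal.ofReal (1 - u ^ 2) ^ e ∂μ < ∞ := by
  obtain ⟨C, hC⟩ := hμ.exists_integral_rpow_le hke
  have hlim (u : ℝ) : Tendsto (fun ε => ENNReal.ofReal (1 - u ^ 2 + ε) ^ e) (𝓝[>] 0)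
      (𝓝 (ENNReal.ofReal (1 - u ^ 2) ^ e)) := by
    have hcont : Continuous fun ε : ℝ => ENNReal.ofReal (1 - u ^ 2 + ε) ^ e :=
      ENNReal.continuous_rpow_const.comp (ENNReal.continuous_ofReal.comp (by fun_prop))
    simpa using (hcont.tendsto 0).mono_left nhdsWithin_le_nhds
  have hbound : ∀ᶠ ε in 𝓝[>] (0 : ℝ),
      ∫⁻ u, ENNReal.ofReal (1 - u ^ 2 + ε) ^ e ∂μ ≤ ENNReal.ofReal C := by
    filter_upwards [Ioc_mem_nhdsGT zero_lt_one] with ε hε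
    have hint := hμ.integrable_of_continuousOn (continuousOn_one_sub_sq_add_rpow hε.1 e)
    calc ∫⁻ u, ENNReal.ofReal (1 - u ^ 2 + ε) ^ e ∂μ
        = ∫⁻ u, ENNReal.ofReal ((1 - u ^ 2 + ε) ^ e) ∂μ := by
          refine lintegral_congr_ae ?_
          filter_upwards [hμ.ae_mem_Icc] with u hu
          exact ENNReal.ofReal_rpow_of_pos (one_sub_sq_add_pos hε.1 hu)
      _ = ENNReal.ofReal (∫ u, (1 - u ^ 2 + ε) ^ e ∂μ) := by
          refine (ofReal_integral_eq_lintegral_ofReal hint ?_).symm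
          filter_upwards [hμ.ae_mem_Icc] with u hu
          exact Real.rpow_nonneg (one_sub_sq_add_pos hε.1 hu).le e
      _ ≤ ENNReal.ofReal C := ENNReal.ofReal_le_ofReal (hC ε hε)
  calc ∫⁻ u, ENNReal.ofReal (1 - u ^ 2) ^ e ∂μ
      = ∫⁻ u, liminf (fun ε => ENNReal.ofReal (1 - u ^ 2 + ε) ^ e) (𝓝[>] 0) ∂μ :=
        lintegral_congr fun u => (hlim u).liminf_eq.symm
    _ ≤ liminf (fun ε => ∫⁻ u, ENNReal.ofReal (1 - u ^ 2 + ε) ^ e ∂μ) (𝓝[>] 0) :=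
        lintegral_liminf_le fun ε => by fun_prop
    _ ≤ ENNReal.ofReal C := liminf_le_of_frequently_le' hbound.frequently
    _ < ∞ := ENNReal.ofReal_lt_top

theorem ae_one_sub_sq_pos (hμ : IsUltraspherical k μ) (hk : k ≠ 0) : ∀ᵐ u ∂μ, 0 < 1 - u ^ 2 := by
  have hk' : (1 : ℝ) ≤ k := mod_cast Nat.one_le_iff_ne_zero.2 hk
  filter_upwards [ae_lt_top (by fun_prop)
    (hμ.lintegral_ofReal_one_sub_sq_rpow_lt_top (e := -1 / 4) (by linarith)).ne] with u hu
  contrapose! hu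
  rw [ENNReal.ofReal_of_nonpos hu, ENNReal.zero_rpow_of_neg (by norm_num)]

theorem integrable_one_sub_sq_rpow (hμ : IsUltraspherical k μ) (hk : k ≠ 0) (hke : -k < 2 * e) :
    Integrable (fun u => (1 - u ^ 2) ^ e) μ := by
  refine ⟨(by fun_prop : Measurable _).aestronglyMeasurable, (lintegral_congr_ae ?_).trans_lt
    (hμ.lintegral_ofReal_one_sub_sq_rpow_lt_top hke)⟩
  filter_upwards [hμ.ae_one_sub_sq_pos hk] with u hu
  rw [Real.enorm_of_nonneg (by positivity), ENNReal.ofReal_rpow_of_pos hu]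

theorem exists_integrable_sqDist_rpow_le (hμ : IsUltraspherical k μ) (hk : k ≠ 0)
    (hke : -k < 2 * e) (S : ℝ) :
    ∃ g, Integrable g μ ∧ ∀ᵐ u ∂μ, ∀ s, |s| ≤ S → sqDist s u ^ e ≤ g u := by
  refine ⟨_, (hμ.integrable_one_sub_sq_rpow hk hke).add (integrable_const (((1 + S) ^ 2) ^ e)), ?_⟩
  filter_upwards [hμ.ae_one_sub_sq_pos hk] with u hu s hs
  exact sqDist_rpow_le hs hu e

theorem integrable_sqDist_rpow (hμ : IsUltraspherical k μ) (hk : k ≠ 0) (hke : -k < 2 * e)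
    (s : ℝ) : Integrable (fun u => sqDist s u ^ e) μ := by
  obtain ⟨g, hg, hle⟩ := hμ.exists_integrable_sqDist_rpow_le hk hke |s|
  refine hg.mono' ((measurable_sqDist_rpow e).comp measurable_prodMk_left).aestronglyMeasurable ?_
  filter_upwards [hμ.ae_one_sub_sq_pos hk, hle] with u hu hgu
  rw [Real.norm_of_nonneg (Real.rpow_nonneg (sqDist_pos hu s).le e)]
  exact hgu s le_rfl

theorem integrable_deriv_sqDist_rpow (hμ : IsUltraspherical k μ) (hk : k ≠ 0)
    (hc : -k < 2 * (c - 1)) (s : ℝ) :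
    Integrable (fun u => 2 * c * (s - u) * sqDist s u ^ (c - 1)) μ := by
  refine ((hμ.integrable_sqDist_rpow hk hc s).const_mul (2 * |c| * (|s| + 1))).mono'
    (Measurable.mul (by fun_prop)
      ((measurable_sqDist_rpow (c - 1)).comp measurable_prodMk_left)).aestronglyMeasurable ?_
  filter_upwards [hμ.ae_one_sub_sq_pos hk] with u hu
  exact abs_deriv_sqDist_rpow_le c s hu

theorem integrable_angularPart (hμ : IsUltraspherical k μ) (hk : k ≠ 0)
    (hc : -k < 2 * (c - 1)) (s : ℝ) : Integrable (angularPart k c s) μ := by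
  refine ((hμ.integrable_sqDist_rpow hk hc s).const_mul (k + 2 * |c - 1| * |s|)).mono'
    ((measurable_angularPart k c).comp measurable_prodMk_left).aestronglyMeasurable ?_
  filter_upwards [hμ.ae_one_sub_sq_pos hk] with u hu
  exact abs_angularPart_le k c s hu

theorem integral_angularPart_eq_zero (hμ : IsUltraspherical k μ) (c : ℝ) (hs : s ^ 2 ≠ 1) :
    ∫ u, angularPart k c s u ∂μ = 0 := by
  have hq {u : ℝ} (hu : u ∈ Icc (-1) 1) : sqDist s u ≠ 0 := (sqDist_pos_of_sq_ne_one hs hu).ne'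
  have hcont (b : ℝ) : ContinuousOn (fun u => sqDist s u ^ b) (Icc (-1) 1) :=
    fun u hu => (hasDerivAt_sqDist_rpow_right b (hq hu)).continuousAt.continuousWithinAt
  have hcont' := (hcont (c - 1 - 1)).const_mul (-(2 * (c - 1) * s))
  have hibp := hμ.mul_integral_mul_eq _ _
    (fun u hu => hasDerivAt_sqDist_rpow_right (c - 1) (hq hu)) hcont'
  have hint₁ : Integrable (fun u => u * sqDist s u ^ (c - 1)) μ :=
    hμ.integrable_of_continuousOn (continuousOn_id.mul (hcont _))
  have hint₂ : Integrable
      (fun u => (1 - u ^ 2) * (-(2 * (c - 1) * s) * sqDist s u ^ (c - 1 - 1))) μ :=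
    hμ.integrable_of_continuousOn (ContinuousOn.mul (by fun_prop) hcont')
  calc ∫ u, angularPart k c s u ∂μ
      = ∫ u, (k * (u * sqDist s u ^ (c - 1)) -
          (1 - u ^ 2) * (-(2 * (c - 1) * s) * sqDist s u ^ (c - 1 - 1))) ∂μ := by
        congr 1 with u
        rw [angularPart, show c - 1 - 1 = c - 2 by ring]
        ring
    _ = 0 := by rw [integral_sub (hint₁.const_mul _) hint₂, integral_const_mul, hibp, sub_self]

theorem integral_sqDist_rpow_eq_add_intervalIntegral (hμ : IsUltraspherical k μ) (hk : k ≠ 0)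
    (hc : -k < 2 * (c - 1)) (a : ℝ) :
    ∫ u, sqDist a u ^ c ∂μ = μ.real univ +
      ∫ s in 0..a, ∫ u, 2 * c * (s - u) * sqDist s u ^ (c - 1) ∂μ := by
  obtain ⟨g, hg, hle⟩ := hμ.exists_integrable_sqDist_rpow_le hk hc |a|
  have hftc := integral_sub_eq_intervalIntegral_integral (ν := μ) (a := 0) (b := a)
    (f := fun s u => sqDist s u ^ c) (f' := fun s u => 2 * c * (s - u) * sqDist s u ^ (c - 1))
    (g := fun u => 2 * |c| * (|a| + 1) * g u)
    (hμ.integrable_sqDist_rpow hk (by linarith) 0) (hμ.integrable_sqDist_rpow hk (by linarith) a)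
    ?_ ?_ ?_ (hg.const_mul _)
  · rw [← hftc]
    simp [sqDist]
  · filter_upwards [hμ.ae_one_sub_sq_pos hk] with u hu s _
    exact hasDerivAt_sqDist_rpow c (sqDist_pos hu s).ne'
  · exact (Measurable.mul (by fun_prop) (measurable_sqDist_rpow (c - 1))).aestronglyMeasurable
  · filter_upwards [hμ.ae_one_sub_sq_pos hk, hle] with u hu hgu s hs
    have hsa := abs_le_of_mem_uIcc_zero hs
    refine (abs_deriv_sqDist_rpow_le c s hu).trans ?_
    gcongr
    · exact Real.rpow_nonneg (sqDist_pos hu s).le _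
    · exact hgu s hsa

theorem pow_mul_integral_deriv_sqDist_rpow (hμ : IsUltraspherical k μ) (hk : k ≠ 0)
    (hc : -k < 2 * (c - 1)) (a : ℝ) :
    a ^ k * ∫ u, 2 * c * (a - u) * sqDist a u ^ (c - 1) ∂μ =
      2 * c * (2 * c + k - 1) * ∫ r in 0..a, r ^ k * ∫ u, sqDist r u ^ (c - 1) ∂μ := by
  obtain ⟨g, hg, hle⟩ := hμ.exists_integrable_sqDist_rpow_le hk hc |a|
  have hint := hμ.integrable_sqDist_rpow hk hc
  have hftc := integral_sub_eq_intervalIntegral_integral (ν := μ) (a := 0) (b := a)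
    (f := fun s u => s ^ k * (2 * c * (s - u) * sqDist s u ^ (c - 1)))
    (f' := fun s u => 2 * c * (2 * c + k - 1) * (s ^ k * sqDist s u ^ (c - 1)) -
        2 * c * s ^ (k - 1) * angularPart k c s u)
    (g := fun u => (|2 * c * (2 * c + k - 1)| * |a| ^ k +
      |2 * c| * |a| ^ (k - 1) * (k + 2 * |c - 1| * |a|)) * g u)
    ((hμ.integrable_deriv_sqDist_rpow hk hc 0).const_mul _)
    ((hμ.integrable_deriv_sqDist_rpow hk hc a).const_mul _) ?_ ?_ ?_ (hg.const_mul _)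
  · simp only [zero_pow hk, zero_mul, integral_zero, sub_zero, integral_const_mul] at hftc
    rw [hftc, ← intervalIntegral.integral_const_mul]
    refine intervalIntegral.integral_congr_ae ?_
    filter_upwards [Measure.ae_ne volume 1, Measure.ae_ne volume (-1)] with r hr₁ hr₂ _
    have hr : r ^ 2 ≠ 1 := sq_ne_one_iff.2 ⟨hr₁, hr₂⟩
    rw [integral_sub (((hint r).const_mul _).const_mul _)
      ((hμ.integrable_angularPart hk hc r).const_mul _)]
    simp only [integral_const_mul, hμ.integral_angularPart_eq_zero c hr, mul_zero, sub_zero]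
  · filter_upwards [hμ.ae_one_sub_sq_pos hk] with u hu s _
    exact hasDerivAt_pow_mul_deriv_sqDist_rpow hk c (sqDist_pos hu s).ne'
  · have := measurable_sqDist_rpow
    have := measurable_angularPart
    refine Measurable.aestronglyMeasurable ?_
    fun_prop
  · filter_upwards [hμ.ae_one_sub_sq_pos hk, hle] with u hu hgu s hs
    have hsa := abs_le_of_mem_uIcc_zero hs
    refine (abs_pow_mul_sub_angularPart_le k c s hu).trans ?_
    gcongr
    · exact Real.rpow_nonneg (sqDist_pos hu s).le _
    · exact hgu s hsa

theorem integral_sqDist_rpow (hμ : IsUltraspherical k μ) (hk : k ≠ 0)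
    (hc : -k < 2 * (c - 1)) (a : ℝ) :
    ∫ u, sqDist a u ^ c ∂μ = μ.real univ + 2 * c * (2 * c + k - 1) *
      ∫ s in 0..a, ∫ r in 0..s, (r / s) ^ k * ∫ u, sqDist r u ^ (c - 1) ∂μ := by
  rw [hμ.integral_sqDist_rpow_eq_add_intervalIntegral hk hc,
    ← intervalIntegral.integral_const_mul]
  congr 1
  refine intervalIntegral.integral_congr_ae ?_
  filter_upwards [Measure.ae_ne volume 0] with s hs _
  have hs' : s ^ k ≠ 0 := pow_ne_zero k hs
  simp only [div_pow, div_mul_eq_mul_div, intervalIntegral.integral_div]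
  rw [mul_div_assoc', ← hμ.pow_mul_integral_deriv_sqDist_rpow hk hc, mul_div_cancel_left₀ _ hs']

end IsUltraspherical

/-! ### Spherical means -/

section Sphere

variable {E : Type*} [NormedAddCommGroup E] [InnerProductSpace ℝ E] {k : ℕ} {x : E} {p : ℝ}

theorem norm_sub_smul_rpow (hx : ‖x‖ = 1) (s p : ℝ) (z : sphere (0 : E) 1) :
    ‖x - s • (z : E)‖ ^ p = sqDist s ⟪x, (z : E)⟫ ^ (p / 2) := by
  have hsq : ‖x - s • (z : E)‖ ^ 2 = sqDist s ⟪x, (z : E)⟫ := by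
    rw [norm_sub_sq_real, hx, real_inner_smul_right, norm_smul, norm_eq_of_mem_sphere, mul_one,
      Real.norm_eq_abs, sq_abs, sqDist]
    ring
  rw [← hsq, ← Real.rpow_natCast, ← Real.rpow_mul (norm_nonneg _), Nat.cast_ofNat,
    mul_div_cancel₀ p two_ne_zero]

variable [MeasurableSpace E] [BorelSpace E] {ν : Measure (sphere (0 : E) 1)}

theorem integral_norm_sub_smul_rpow_eq_integral_map (hx : ‖x‖ = 1) (s p : ℝ) :
    ∫ z, ‖x - s • (z : E)‖ ^ p ∂ν =
      ∫ u, sqDist s u ^ (p / 2) ∂ν.map fun z : sphere (0 : E) 1 => ⟪x, (z : E)⟫ := by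
  simp only [norm_sub_smul_rpow hx]
  exact (integral_map (by fun_prop)
    ((measurable_sqDist_rpow _).comp measurable_prodMk_left).aestronglyMeasurable).symm

variable [FiniteDimensional ℝ E] [IsFiniteMeasure ν]

theorem isUltraspherical_map_inner
    (hν : ∀ R : E ≃ₗᵢ[ℝ] E, MeasurePreserving (sphereHomeomorph R) ν ν)
    (hk : Module.finrank ℝ E = k + 1) (hx : ‖x‖ = 1) :
    IsUltraspherical k (ν.map fun z : sphere (0 : E) 1 => ⟪x, (z : E)⟫) := by
  have hφ : Measurable fun z : sphere (0 : E) 1 => ⟪x, (z : E)⟫ := by fun_prop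
  have hmem : ∀ᵐ u ∂ν.map fun z : sphere (0 : E) 1 => ⟪x, (z : E)⟫, u ∈ Icc (-1) 1 :=
    (ae_map_iff hφ.aemeasurable measurableSet_Icc).2
      (ae_of_all _ (inner_mem_Icc_of_mem_sphere hx))
  refine ⟨hmem, fun h h' hd hc => ?_⟩
  have htransfer {f : ℝ → ℝ} (hf : ContinuousOn f (Icc (-1) 1)) :
      ∫ u, f u ∂ν.map (fun z : sphere (0 : E) 1 => ⟪x, (z : E)⟫) = ∫ z, f ⟪x, (z : E)⟫ ∂ν :=
    integral_map hφ.aemeasurable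
      (integrable_of_continuousOn_of_ae_mem isCompact_Icc hmem hf).aestronglyMeasurable
  rw [htransfer (f := fun u => u * h u) (continuousOn_id.mul (HasDerivAt.continuousOn hd)),
    htransfer (f := fun u => (1 - u ^ 2) * h' u) (ContinuousOn.mul (by fun_prop) hc)]
  exact mul_integral_inner_mul_eq_integral_one_sub_inner_sq_mul hν hk hx hd hc

theorem integrable_norm_sub_smul_rpow
    (hν : ∀ R : E ≃ₗᵢ[ℝ] E, MeasurePreserving (sphereHomeomorph R) ν ν)
    (hk : Module.finrank ℝ E = k + 1) (hk₀ : k ≠ 0) (hp : -k < p) (hx : ‖x‖ = 1) (s : ℝ) :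
    Integrable (fun z : sphere (0 : E) 1 => ‖x - s • (z : E)‖ ^ p) ν := by
  simp only [norm_sub_smul_rpow hx]
  exact ((isUltraspherical_map_inner hν hk hx).integrable_sqDist_rpow hk₀
    (by linarith) s).comp_measurable (by fun_prop)

theorem integral_norm_sub_smul_rpow
    (hν : ∀ R : E ≃ₗᵢ[ℝ] E, MeasurePreserving (sphereHomeomorph R) ν ν)
    (hk : Module.finrank ℝ E = k + 1) (hk₀ : k ≠ 0) (hp : -k < p - 2) (hx : ‖x‖ = 1) (a : ℝ) :
    ∫ z, ‖x - a • (z : E)‖ ^ p ∂ν = ν.real univ + a ^ 2 * p * (p + k - 1) *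
      ∫ t in 0..1, ∫ r in 0..t, (r / t) ^ k * ∫ z, ‖x - (a * r) • (z : E)‖ ^ (p - 2) ∂ν := by
  have hμ := isUltraspherical_map_inner hν hk hx
  simp only [integral_norm_sub_smul_rpow_eq_integral_map hx, sub_div, div_self (two_ne_zero' ℝ)]
  rw [hμ.integral_sqDist_rpow hk₀ (by linarith), intervalIntegral_integral_div_pow_mul_eq,
    map_measureReal_apply (by fun_prop) .univ, preimage_univ, mul_div_cancel₀ p two_ne_zero]
  ring

end Sphere

theorem isProbabilityMeasure_sphereHaar {n : ℕ} (hn : n ≠ 0) :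
    IsProbabilityMeasure (sphereHaar n) := by
  have : NeZero n := ⟨hn⟩
  constructor
  rw [sphereHaar, Measure.smul_apply, smul_eq_mul]
  exact ENNReal.inv_mul_cancel
    (Measure.measure_univ_ne_zero.2 (Measure.toSphere_ne_zero _)) (measure_ne_top _ _)

theorem measurePreserving_sphereHomeomorph_sphereHaar {n : ℕ}
    (R : EuclideanSpace ℝ (Fin n) ≃ₗᵢ[ℝ] EuclideanSpace ℝ (Fin n)) :
    MeasurePreserving (sphereHomeomorph R) (sphereHaar n) (sphereHaar n) :=
  (measurePreserving_sphereHomeomorph R R.measurePreserving).smul_measure _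

theorem stmt_4_general (n : ℕ) (hn : 2 ≤ n) (p : ℝ) (hp : 3 - (n : ℝ) < p)
    (x : EuclideanSpace ℝ (Fin n)) (hx : ‖x‖ = 1) (a : ℝ) :
    (∀ r : ℝ, Integrable (fun z : sphere (0 : EuclideanSpace ℝ (Fin n)) 1 =>
        ‖x - (a * r) • (z : EuclideanSpace ℝ (Fin n))‖ ^ (p - 2)) (sphereHaar n)) ∧
    (∫ z : sphere (0 : EuclideanSpace ℝ (Fin n)) 1,
        ‖x - a • (z : EuclideanSpace ℝ (Fin n))‖ ^ p ∂(sphereHaar n)) =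
      1 + a ^ 2 * p * (p + (n : ℝ) - 2) *
        ∫ t in (0 : ℝ)..1, ∫ r in (0 : ℝ)..t, (r / t) ^ (n - 1) *
          ∫ z : sphere (0 : EuclideanSpace ℝ (Fin n)) 1,
            ‖x - (a * r) • (z : EuclideanSpace ℝ (Fin n))‖ ^ (p - 2) ∂(sphereHaar n) := by
  have := isProbabilityMeasure_sphereHaar (n := n) (by lia)
  have hν := measurePreserving_sphereHomeomorph_sphereHaar (n := n)
  have hfinrank : Module.finrank ℝ (EuclideanSpace ℝ (Fin n)) = n - 1 + 1 := by
    rw [finrank_euclideanSpace_fin]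
    lia
  have hk : ((n - 1 : ℕ) : ℝ) = n - 1 := Nat.cast_pred (by lia)
  refine ⟨fun r => integrable_norm_sub_smul_rpow hν hfinrank (by lia)
    (by rw [hk]; linarith) hx (a * r), ?_⟩
  rw [integral_norm_sub_smul_rpow hν hfinrank (by lia) (by rw [hk]; linarith) hx, probReal_univ,
    hk]
  ring

theorem stmt_4 (n : ℕ) (hn : 3 ≤ n) (p : ℝ) (hp : p ∈ Set.Ioc (0 : ℝ) 2)
    (x : EuclideanSpace ℝ (Fin n)) (hx : ‖x‖ = 1) (a : ℝ) :
    (∀ r : ℝ, Integrable (fun z : sphere (0 : EuclideanSpace ℝ (Fin n)) 1 =>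
        ‖x - (a * r) • (z : EuclideanSpace ℝ (Fin n))‖ ^ (p - 2)) (sphereHaar n)) ∧
    (∫ z : sphere (0 : EuclideanSpace ℝ (Fin n)) 1,
        ‖x - a • (z : EuclideanSpace ℝ (Fin n))‖ ^ p ∂(sphereHaar n)) =
      1 + a ^ 2 * p * (p + (n : ℝ) - 2) *
        ∫ t in (0 : ℝ)..1, ∫ r in (0 : ℝ)..t, (r / t) ^ (n - 1) *
          ∫ z : sphere (0 : EuclideanSpace ℝ (Fin n)) 1,
            ‖x - (a * r) • (z : EuclideanSpace ℝ (Fin n))‖ ^ (p - 2) ∂(sphereHaar n) :=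
  stmt_4_general n (by lia) p
    (by linarith [hp.1, (Nat.ofNat_le_cast (α := ℝ)).2 hn]) x hx a
end

section
/- Let n ∈ ℕ with n ≥ 2, let p, q ∈ ℝ with 6 ≤ p ≤ q, and let r ∈ ℝ with |r| ≤ √((p+n-2)/(q+n-2)). Then for all x ∈ ℝⁿ and all a ∈ ℝ, (∫_{S^{n-1}} |x + a r y|^q dσ(y))^{1/q} ≤ (∫_{S^{n-1}} |x + a y|^p dσ(y))^{1/p}. -/
open MeasureTheory Metric

/-! For a unit vector `e`, the moments of `‖e + ρ • y‖ ^ 2` depend only on the law of the coordinate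
`⟪e, y⟫`. Rotating a plane through `e` and differentiating at angle `0` gives an integration by
parts formula for this law. It turns into a three-term recurrence for the moments `M k ρ`, and
hence into a Riccati equation for `Q k ρ = 1 - ρ * (d/dρ) log (M k ρ) / k`.

Along the rays `s ↦ (a * s, b * s)` with `(l + ν) * b ^ 2 ≤ (k + ν) * a ^ 2`, where `ν = n / 2 - 1`,
the two Riccati equations are comparable as long as the radii are at most `1`, so that
`Q k a ≤ Q l b`. Beyond radius `1` the inversion `ρ ↦ ρ⁻¹`, which changes the sign of `Q`, asks
instead for the opposite inequality at radii `a⁻¹ ≤ b⁻¹ ≤ 1`, and this follows by comparing the same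
equations. Integrating the logarithmic derivatives along the rays from the common value `M k 0 = 1`
gives `M l b ^ l⁻¹ ≤ M k a ^ k⁻¹`. -/

open scoped Topology

theorem le_of_hasDerivAt_le_of_lt {f f' g g' : ℝ → ℝ} {a b : ℝ} (hab : a ≤ b)
    (hf : ContinuousOn f (Set.Icc a b)) (hg : ContinuousOn g (Set.Icc a b))
    (hf' : ∀ x ∈ Set.Ioo a b, HasDerivAt f (f' x) x)
    (hg' : ∀ x ∈ Set.Ioo a b, HasDerivAt g (g' x) x) (ha : f a ≤ g a)
    (bound : ∀ x ∈ Set.Ioo a b, g x < f x → f' x ≤ g' x) : f b ≤ g b := by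
  have hclosed : IsClosed {x ∈ Set.Icc a b | f x ≤ g x} := isClosed_Icc.isClosed_le hf hg
  obtain ⟨c, ⟨⟨hac, hcb⟩, hc⟩, hlast⟩ := (isCompact_Icc.of_isClosed_subset hclosed
    (Set.sep_subset _ _)).exists_isGreatest ⟨a, ⟨le_rfl, hab⟩, ha⟩
  have hIoo : Set.Ioo c b ⊆ Set.Ioo a b := Set.Ioo_subset_Ioo_left hac
  have hmono : MonotoneOn (g - f) (Set.Icc c b) := by
    refine monotoneOn_of_hasDerivWithinAt_nonneg (f' := g' - f') (convex_Icc c b)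
      ((hg.sub hf).mono (Set.Icc_subset_Icc_left hac)) ?_ ?_ <;> rw [interior_Icc] <;> intro x hx
    · exact ((hg' x (hIoo hx)).sub (hf' x (hIoo hx))).hasDerivWithinAt
    · refine sub_nonneg.2 (bound x (hIoo hx) (not_le.1 fun hle => hx.1.not_ge ?_))
      exact hlast ⟨Set.Ioo_subset_Icc_self (hIoo hx), hle⟩
  have hcb' := hmono (Set.left_mem_Icc.2 hcb) (Set.right_mem_Icc.2 hcb) hcb
  exact sub_nonneg.1 ((sub_nonneg.2 hc).trans hcb')

section ParametricIntegral

variable {Ω : Type*} [TopologicalSpace Ω] [CompactSpace Ω] [MeasurableSpace Ω]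
  [OpensMeasurableSpace Ω] {μ : Measure Ω} [IsFiniteMeasure μ]

theorem integrable_of_continuous {f : Ω → ℝ} (hf : Continuous f) : Integrable f μ :=
  hf.integrable_of_hasCompactSupport (HasCompactSupport.of_compactSpace _)

theorem hasDerivAt_integral_of_continuousOn {F F' : ℝ → Ω → ℝ} {U : Set ℝ} {x : ℝ} (hU : U ∈ 𝓝 x)
    (hF : ∀ z ∈ U, Continuous (F z)) (hF' : ContinuousOn (Function.uncurry F') (U ×ˢ Set.univ))
    (h : ∀ z ∈ U, ∀ y, HasDerivAt (F · y) (F' z y) z) :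
    HasDerivAt (fun z => ∫ y, F z y ∂μ) (∫ y, F' x y ∂μ) x := by
  have hx : x ∈ U := mem_of_mem_nhds hU
  obtain ⟨K, hK, hKU, hKc⟩ := local_compact_nhds hU
  obtain ⟨C, hC⟩ := (hKc.prod (isCompact_univ (X := Ω))).exists_bound_of_continuousOn
    (hF'.mono (Set.prod_mono_left hKU))
  have hF'x : Continuous (F' x) :=
    hF'.comp_continuous (f := fun y => (x, y)) (by fun_prop) fun _ => ⟨hx, Set.mem_univ _⟩
  refine (hasDerivAt_integral_of_dominated_loc_of_deriv_le (bound := fun _ => C) hK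
    ?_ (integrable_of_continuous (hF x hx)) hF'x.aestronglyMeasurable_of_compactSpace
    (.of_forall fun y z hz => hC (z, y) ⟨hz, Set.mem_univ _⟩) (integrable_const _)
    (.of_forall fun y z hz => h z (hKU hz) y)).2
  filter_upwards [hU] with z hz using (hF z hz).aestronglyMeasurable_of_compactSpace

end ParametricIntegral

section Moment

/-- The squared norm of `e + ρ • y` for unit vectors `e` and `y` with inner product `x`. -/
def normSqAdd (ρ x : ℝ) : ℝ :=
  1 + ρ ^ 2 + 2 * ρ * x

/-- The `k`-th moment of `‖e + ρ • y‖ ^ 2` when the inner product of the unit vectors `e` and `y`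
has law `μ`. -/
noncomputable def moment (μ : Measure (Set.Icc (-1 : ℝ) 1)) (k ρ : ℝ) : ℝ :=
  ∫ x, normSqAdd ρ x ^ k ∂μ

/-- The quantity `1 - ρ * (d/dρ) log (moment μ k ρ) / k`, in the closed form that it takes for
rotation-invariant laws; it satisfies a Riccati equation. -/
noncomputable def momentRatio (μ : Measure (Set.Icc (-1 : ℝ) 1)) (k ρ : ℝ) : ℝ :=
  (1 - ρ ^ 2) * moment μ (k - 1) ρ / moment μ k ρ

@[fun_prop]
theorem continuous_normSqAdd : Continuous (Function.uncurry normSqAdd) := by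
  unfold Function.uncurry normSqAdd
  fun_prop

theorem hasDerivAt_normSqAdd_left (ρ x : ℝ) :
    HasDerivAt (normSqAdd · x) (2 * ρ + 2 * x) ρ := by
  unfold normSqAdd
  have h := ((hasDerivAt_pow 2 ρ).const_add 1).add (((hasDerivAt_id ρ).const_mul 2).mul_const x)
  exact h.congr_deriv (by simp)

theorem hasDerivAt_normSqAdd_right (ρ x : ℝ) : HasDerivAt (normSqAdd ρ) (2 * ρ) x := by
  unfold normSqAdd
  simpa using ((hasDerivAt_id x).const_mul (2 * ρ)).const_add (1 + ρ ^ 2)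

theorem sq_mul_normSqAdd_inv {ρ : ℝ} (hρ : ρ ≠ 0) (x : ℝ) :
    ρ ^ 2 * normSqAdd ρ⁻¹ x = normSqAdd ρ x := by
  unfold normSqAdd
  field_simp
  ring

theorem sq_one_sub_abs_le_normSqAdd {x : ℝ} (hx : x ∈ Set.Icc (-1 : ℝ) 1) (ρ : ℝ) :
    (1 - |ρ|) ^ 2 ≤ normSqAdd ρ x := by
  have hρx : |ρ * x| ≤ |ρ| := by
    rw [abs_mul]
    exact mul_le_of_le_one_right (abs_nonneg ρ) (abs_le.2 hx)
  unfold normSqAdd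
  linarith [neg_le_of_abs_le hρx, sq_abs ρ]

theorem normSqAdd_nonneg {x : ℝ} (hx : x ∈ Set.Icc (-1 : ℝ) 1) (ρ : ℝ) : 0 ≤ normSqAdd ρ x :=
  (sq_nonneg _).trans (sq_one_sub_abs_le_normSqAdd hx ρ)

theorem normSqAdd_ne_zero {x ρ : ℝ} (hx : x ∈ Set.Icc (-1 : ℝ) 1) (hρ : |ρ| ≠ 1) :
    normSqAdd ρ x ≠ 0 :=
  ((sq_pos_of_ne_zero (sub_ne_zero.2 hρ.symm)).trans_le (sq_one_sub_abs_le_normSqAdd hx ρ)).ne'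

theorem normSqAdd_le_sq {x ρ : ℝ} (hx : x ≤ 1) (hρ : 0 ≤ ρ) : normSqAdd ρ x ≤ (1 + ρ) ^ 2 := by
  unfold normSqAdd
  linarith [mul_le_of_le_one_right hρ hx]

theorem normSqAdd_rpow {x k ρ : ℝ} (hx : x ∈ Set.Icc (-1 : ℝ) 1) (h : |ρ| ≠ 1 ∨ 1 ≤ k) :
    normSqAdd ρ x ^ k = normSqAdd ρ x * normSqAdd ρ x ^ (k - 1) := by
  rcases h with hρ | hk
  · rw [Real.rpow_sub_one (normSqAdd_ne_zero hx hρ), mul_div_cancel₀ _ (normSqAdd_ne_zero hx hρ)]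
  · rw [mul_comm, ← Real.rpow_add_one' (normSqAdd_nonneg hx ρ) (by linarith), sub_add_cancel]

theorem continuousOn_normSqAdd_rpow (k : ℝ) :
    ContinuousOn (fun z : ℝ × Set.Icc (-1 : ℝ) 1 => normSqAdd z.1 z.2 ^ k)
      {z | |z.1| ≠ 1 ∨ 0 ≤ k} :=
  ContinuousOn.rpow_const (by fun_prop) fun z hz => hz.imp_left (normSqAdd_ne_zero z.2.2)

theorem continuous_normSqAdd_rpow {k ρ : ℝ} (h : |ρ| ≠ 1 ∨ 0 ≤ k) :
    Continuous fun x : Set.Icc (-1 : ℝ) 1 => normSqAdd ρ x ^ k :=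
  (continuousOn_normSqAdd_rpow k).comp_continuous (f := fun x => (ρ, x)) (by fun_prop) fun _ => h

variable {μ : Measure (Set.Icc (-1 : ℝ) 1)} {k ρ : ℝ}

theorem moment_nonneg (μ : Measure (Set.Icc (-1 : ℝ) 1)) (k ρ : ℝ) : 0 ≤ moment μ k ρ :=
  integral_nonneg fun x => Real.rpow_nonneg (normSqAdd_nonneg x.2 ρ) k

theorem moment_eq_rpow_mul_moment_inv (μ : Measure (Set.Icc (-1 : ℝ) 1)) (k : ℝ) (hρ : ρ ≠ 0) :
    moment μ k ρ = (ρ ^ 2) ^ k * moment μ k ρ⁻¹ := by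
  simp only [moment, ← integral_const_mul]
  congr 1 with x
  rw [← sq_mul_normSqAdd_inv hρ, Real.mul_rpow (sq_nonneg ρ) (normSqAdd_nonneg x.2 _)]

theorem moment_zero_right (μ : Measure (Set.Icc (-1 : ℝ) 1)) [IsProbabilityMeasure μ] (k : ℝ) :
    moment μ k 0 = 1 := by
  simp [moment, normSqAdd]

theorem momentRatio_zero_right (μ : Measure (Set.Icc (-1 : ℝ) 1)) [IsProbabilityMeasure μ] (k : ℝ) :
    momentRatio μ k 0 = 1 := by
  simp [momentRatio, moment_zero_right]

theorem momentRatio_nonneg (hρ : 0 ≤ ρ) (hρ1 : ρ ≤ 1) : 0 ≤ momentRatio μ k ρ :=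
  div_nonneg (mul_nonneg (by nlinarith) (moment_nonneg ..)) (moment_nonneg ..)

theorem momentRatio_nonpos (hρ1 : 1 ≤ ρ) : momentRatio μ k ρ ≤ 0 :=
  div_nonpos_of_nonpos_of_nonneg
    (mul_nonpos_of_nonpos_of_nonneg (by nlinarith) (moment_nonneg ..)) (moment_nonneg ..)

theorem momentRatio_inv (hρ : ρ ≠ 0) : momentRatio μ k ρ⁻¹ = -momentRatio μ k ρ := by
  have hpow : (ρ ^ 2) ^ k = ρ ^ 2 * (ρ ^ 2) ^ (k - 1) := by
    rw [Real.rpow_sub_one (by positivity), mul_div_cancel₀ _ (by positivity)]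
  have : 0 < (ρ ^ 2) ^ (k - 1) := by positivity
  rw [momentRatio, momentRatio, moment_eq_rpow_mul_moment_inv μ k hρ,
    moment_eq_rpow_mul_moment_inv μ (k - 1) hρ, hpow]
  field_simp
  ring

variable [IsFiniteMeasure μ]

theorem integrable_normSqAdd_rpow (h : |ρ| ≠ 1 ∨ 0 ≤ k) :
    Integrable (fun x : Set.Icc (-1 : ℝ) 1 => normSqAdd ρ x ^ k) μ :=
  integrable_of_continuous (continuous_normSqAdd_rpow h)

theorem continuous_moment (hk : 0 ≤ k) : Continuous (moment μ k) := by
  have hc : Continuous fun z : ℝ × Set.Icc (-1 : ℝ) 1 => normSqAdd z.1 z.2 ^ k :=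
    Continuous.rpow_const (by fun_prop) fun _ => .inr hk
  unfold moment
  simpa only [Measure.restrict_univ] using
    continuous_parametric_integral_of_continuous (μ := μ) hc isCompact_univ

theorem moment_le_sq_mul_moment_sub_one (hk : 1 ≤ k) (hρ : 0 ≤ ρ) :
    moment μ k ρ ≤ (1 + ρ) ^ 2 * moment μ (k - 1) ρ := by
  rw [moment, moment, ← integral_const_mul]
  refine integral_mono (integrable_normSqAdd_rpow (.inr (by linarith)))
    ((integrable_normSqAdd_rpow (.inr (by linarith))).const_mul _) fun x => ?_
  change normSqAdd ρ x ^ k ≤ (1 + ρ) ^ 2 * normSqAdd ρ x ^ (k - 1)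
  rw [normSqAdd_rpow x.2 (.inr hk)]
  gcongr
  · exact Real.rpow_nonneg (normSqAdd_nonneg x.2 ρ) _
  · exact normSqAdd_le_sq x.2.2 hρ

theorem two_mul_mul_integral_mul_rpow (h : |ρ| ≠ 1 ∨ 1 ≤ k) :
    2 * ρ * ∫ x, x * normSqAdd ρ x ^ (k - 1) ∂μ =
      moment μ k ρ - (1 + ρ ^ 2) * moment μ (k - 1) ρ := by
  rw [moment, moment, ← integral_const_mul, ← integral_const_mul, ← integral_sub
    (integrable_normSqAdd_rpow (h.imp_right zero_le_one.trans))
    ((integrable_normSqAdd_rpow (h.imp_right sub_nonneg.2)).const_mul _)]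
  congr 1 with x
  rw [normSqAdd_rpow x.2 h, normSqAdd]
  ring

theorem four_mul_sq_mul_integral_one_sub_sq_mul_rpow (h : |ρ| ≠ 1) :
    4 * ρ ^ 2 * ∫ x, (1 - (x : ℝ) ^ 2) * normSqAdd ρ x ^ (k - 2) ∂μ =
      2 * (1 + ρ ^ 2) * moment μ (k - 1) ρ - moment μ k ρ -
        (1 - ρ ^ 2) ^ 2 * moment μ (k - 2) ρ := by
  have hi (l : ℝ) : Integrable (fun x : Set.Icc (-1 : ℝ) 1 => normSqAdd ρ x ^ l) μ :=
    integrable_normSqAdd_rpow (.inl h)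
  rw [sub_sub, moment, moment, moment, ← integral_const_mul, ← integral_const_mul,
    ← integral_const_mul, ← integral_add (hi _) ((hi _).const_mul _),
    ← integral_sub ((hi _).const_mul _) (by exact (hi _).add ((hi _).const_mul _))]
  congr 1 with x
  rw [normSqAdd_rpow (k := k) x.2 (.inl h), normSqAdd_rpow (k := k - 1) x.2 (.inl h),
    sub_sub, one_add_one_eq_two, normSqAdd]
  ring

theorem hasDerivAt_moment (hρ : ρ ≠ 0) (h : |ρ| ≠ 1 ∨ 1 ≤ k) :
    HasDerivAt (moment μ k) (k * (moment μ k ρ - (1 - ρ ^ 2) * moment μ (k - 1) ρ) / ρ) ρ := by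
  have hU : IsOpen {z : ℝ | |z| ≠ 1 ∨ 1 ≤ k} :=
    (isOpen_ne.preimage continuous_abs).union isOpen_const
  have hderiv := hasDerivAt_integral_of_continuousOn (μ := μ)
    (F := fun z (x : Set.Icc (-1 : ℝ) 1) => normSqAdd z x ^ k)
    (F' := fun z x => k * (normSqAdd z x ^ (k - 1) * (2 * z + 2 * x))) (hU.mem_nhds h)
    (fun z hz => continuous_normSqAdd_rpow (hz.imp_right zero_le_one.trans))
    (.mul (by fun_prop) (((continuousOn_normSqAdd_rpow (k - 1)).mono fun z hz =>
      hz.1.imp_right sub_nonneg.2).mul (by fun_prop)))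
    fun z hz x => ((hasDerivAt_normSqAdd_left z x).rpow_const
      (hz.imp_left (normSqAdd_ne_zero x.2))).congr_deriv (by ring)
  refine hderiv.congr_deriv ?_
  have hi : Integrable (fun x : Set.Icc (-1 : ℝ) 1 => normSqAdd ρ x ^ (k - 1)) μ :=
    integrable_normSqAdd_rpow (h.imp_right sub_nonneg.2)
  have hix : Integrable (fun x : Set.Icc (-1 : ℝ) 1 => x * normSqAdd ρ x ^ (k - 1)) μ :=
    integrable_of_continuous (continuous_subtype_val.mul
      (continuous_normSqAdd_rpow (h.imp_right sub_nonneg.2)))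
  have hsplit : ∫ x, normSqAdd ρ x ^ (k - 1) * (2 * ρ + 2 * x) ∂μ =
      2 * ρ * moment μ (k - 1) ρ + 2 * ∫ x, x * normSqAdd ρ x ^ (k - 1) ∂μ := by
    rw [moment, ← integral_const_mul, ← integral_const_mul,
      ← integral_add (hi.const_mul _) (hix.const_mul _)]
    congr 1 with x
    ring
  rw [integral_const_mul, hsplit, eq_div_iff hρ]
  linear_combination k * two_mul_mul_integral_mul_rpow (μ := μ) h

end Moment

section Riccati

/-- The right-hand side of the Riccati equation `ρ * Q' = riccatiField ν k ρ Q` satisfied on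
`(0, 1)` by the moment ratio `Q = momentRatio μ k` of an ultraspherical law `μ` of parameter `ν`. -/
noncomputable def riccatiField (ν k ρ Q : ℝ) : ℝ :=
  k * (1 - Q) ^ 2 + 2 * ν * (1 - Q) - 4 * ((k + ν) * ρ ^ 2) * (Q / (1 - ρ ^ 2))

variable {ν k l a b Q Q₁ Q₂ : ℝ}

theorem le_of_mul_sq_le_mul_sq (hkl : k ≤ l) (hl : 0 < l) (ha : 0 ≤ a)
    (hab : l * b ^ 2 ≤ k * a ^ 2) : b ≤ a :=
  le_of_sq_le_sq (le_of_mul_le_mul_left (hab.trans (by gcongr)) hl) ha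

theorem riccatiField_le_riccatiField_of_mul_sq_le (hν : 0 ≤ ν) (hk : 0 < k) (hkl : k ≤ l)
    (ha : 0 ≤ a) (ha1 : a < 1) (hb : 0 ≤ b)
    (hab : (l + ν) * b ^ 2 ≤ (k + ν) * a ^ 2) (hQ₂ : 0 ≤ Q₂) (hQ : Q₂ ≤ Q₁) (hQ₁ : Q₁ ≤ 1) :
    riccatiField ν k a Q₁ ≤ riccatiField ν l b Q₂ := by
  have hl : 0 < l := hk.trans_le hkl
  have hba : b ≤ a := le_of_mul_sq_le_mul_sq (by linarith) (by linarith) ha hab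
  have ha2 : 0 < 1 - a ^ 2 := by nlinarith
  have hdiv : Q₂ / (1 - b ^ 2) ≤ Q₁ / (1 - a ^ 2) := by gcongr; exact hQ₂.trans hQ
  have hdiv₂ : 0 ≤ Q₂ / (1 - b ^ 2) := div_nonneg hQ₂ (by nlinarith)
  have hpole : (l + ν) * b ^ 2 * (Q₂ / (1 - b ^ 2)) ≤ (k + ν) * a ^ 2 * (Q₁ / (1 - a ^ 2)) := by
    gcongr
  have hsq : k * (1 - Q₁) ^ 2 ≤ l * (1 - Q₂) ^ 2 := by gcongr
  have hlin : 2 * ν * (1 - Q₁) ≤ 2 * ν * (1 - Q₂) := by gcongr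
  unfold riccatiField
  linarith

theorem sq_one_sub_le_of_one_sub_le_mul (ha : 0 ≤ a) (ha1 : a < 1)
    (haQ : 1 - a ≤ (1 + a) * Q) (hQ : Q ≤ 1) :
    (1 - Q) ^ 2 ≤ 4 * a ^ 2 * (Q / (1 - a ^ 2)) := by
  have ha2 : 0 < 1 - a ^ 2 := by nlinarith
  have hnum : (1 + a) * (1 - Q) ≤ 2 * a := by linarith
  rw [← mul_div_assoc, le_div_iff₀ ha2]
  have : 0 ≤ (1 + a) * (1 - Q) := mul_nonneg (by linarith) (by linarith)
  calc (1 - Q) ^ 2 * (1 - a ^ 2)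
      = (1 + a) * (1 - Q) * ((1 + a) * (1 - Q)) * ((1 - a) / (1 + a)) := by field_simp; ring
    _ ≤ 2 * a * (2 * a) * Q := by
        gcongr
        exact (div_le_iff₀' (by linarith)).2 haQ
    _ = 4 * a ^ 2 * Q := by ring

theorem riccatiField_anti_left (hkl : k ≤ l) (ha : 0 ≤ a) (ha1 : a < 1)
    (haQ : 1 - a ≤ (1 + a) * Q) (hQ : Q ≤ 1) : riccatiField ν l a Q ≤ riccatiField ν k a Q := by
  have h := mul_le_mul_of_nonneg_left (sq_one_sub_le_of_one_sub_le_mul ha ha1 haQ hQ)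
    (sub_nonneg.2 hkl)
  unfold riccatiField
  linarith

end Riccati

/-- `μ` is the law of a coordinate of a uniform random point of the unit sphere of dimension
`2 * ν + 1`. The law is encoded by the integration by parts formula that characterizes it, which
avoids its density and makes sense for every real `ν`. -/
def IsUltraspherical_s13 (μ : Measure (Set.Icc (-1 : ℝ) 1)) (ν : ℝ) : Prop :=
  ∀ h h' : ℝ → ℝ, ContinuousOn h' (Set.Icc (-1) 1) →
    (∀ x ∈ Set.Icc (-1 : ℝ) 1, HasDerivAt h (h' x) x) →
    (2 * ν + 1) * ∫ x, x * h x ∂μ = ∫ x, (1 - (x : ℝ) ^ 2) * h' x ∂μ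

namespace IsUltraspherical_s13

variable {μ : Measure (Set.Icc (-1 : ℝ) 1)} {ν k l ρ a b : ℝ}

theorem integral_eq_zero (hμ : IsUltraspherical_s13 μ ν) (hν : 0 ≤ ν) : ∫ x, (x : ℝ) ∂μ = 0 := by
  have h := hμ (fun _ => 1) (fun _ => 0) continuousOn_const fun x _ => hasDerivAt_const x 1
  simp only [mul_one, mul_zero, integral_zero, mul_eq_zero] at h
  exact h.resolve_left (by positivity)

theorem integral_mul_rpow (hμ : IsUltraspherical_s13 μ ν) (hρ : |ρ| ≠ 1) (k : ℝ) :
    (2 * ν + 1) * ∫ x, x * normSqAdd ρ x ^ (k - 1) ∂μ =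
      2 * ρ * (k - 1) * ∫ x, (1 - (x : ℝ) ^ 2) * normSqAdd ρ x ^ (k - 2) ∂μ := by
  have hc : ContinuousOn (fun x => 2 * ρ * (k - 1) * normSqAdd ρ x ^ (k - 2)) (Set.Icc (-1) 1) :=
    continuousOn_const.mul (ContinuousOn.rpow_const (by fun_prop) fun x hx =>
      .inl (normSqAdd_ne_zero hx hρ))
  rw [hμ (fun x => normSqAdd ρ x ^ (k - 1)) _ hc fun x hx =>
    ((hasDerivAt_normSqAdd_right ρ x).rpow_const (.inl (normSqAdd_ne_zero hx hρ))).congr_deriv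
      (by ring_nf), ← integral_const_mul]
  congr 1 with x
  ring

section IsFiniteMeasure

variable [IsFiniteMeasure μ]

theorem moment_recurrence (hμ : IsUltraspherical_s13 μ ν) (hρ : |ρ| ≠ 1) (k : ℝ) :
    (k + 2 * ν) * moment μ k ρ =
      (2 * k + 2 * ν - 1) * (1 + ρ ^ 2) * moment μ (k - 1) ρ -
        (k - 1) * (1 - ρ ^ 2) ^ 2 * moment μ (k - 2) ρ := by
  linear_combination 2 * ρ * hμ.integral_mul_rpow hρ k -
    (2 * ν + 1) * two_mul_mul_integral_mul_rpow (μ := μ) (k := k) (.inl hρ) +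
    (k - 1) * four_mul_sq_mul_integral_one_sub_sq_mul_rpow (μ := μ) (k := k) hρ

theorem one_sub_sq_mul_moment_le (hμ : IsUltraspherical_s13 μ ν) (hν : 0 ≤ ν) (hk : 1 ≤ k)
    (hρ : 0 ≤ ρ) (hρ1 : ρ < 1) : (1 - ρ ^ 2) * moment μ (k - 1) ρ ≤ moment μ k ρ := by
  have hρ' : |ρ| ≠ 1 := by rw [abs_of_nonneg hρ]; exact hρ1.ne
  have hint : 0 ≤ ∫ x, x * normSqAdd ρ x ^ (k - 1) ∂μ := by
    refine nonneg_of_mul_nonneg_right (a := 2 * ν + 1) ?_ (by positivity)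
    rw [hμ.integral_mul_rpow hρ']
    refine mul_nonneg (mul_nonneg (by positivity) (by linarith)) (integral_nonneg fun x => ?_)
    exact mul_nonneg (sub_nonneg.2 ((sq_le_one_iff_abs_le_one _).2 (abs_le.2 x.2)))
      (Real.rpow_nonneg (normSqAdd_nonneg x.2 ρ) _)
  have hsub : moment μ k ρ - (1 - ρ ^ 2) * moment μ (k - 1) ρ =
      2 * ρ ^ 2 * moment μ (k - 1) ρ + 2 * ρ * ∫ x, x * normSqAdd ρ x ^ (k - 1) ∂μ := by
    linear_combination -two_mul_mul_integral_mul_rpow (μ := μ) (k := k) (.inl hρ')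
  have := moment_nonneg μ (k - 1) ρ
  rw [← sub_nonneg, hsub]
  positivity

theorem momentRatio_le_one (hμ : IsUltraspherical_s13 μ ν) (hν : 0 ≤ ν) (hk : 1 ≤ k)
    (hρ : 0 ≤ ρ) (hρ1 : ρ < 1) : momentRatio μ k ρ ≤ 1 :=
  div_le_one_of_le₀ (hμ.one_sub_sq_mul_moment_le hν hk hρ hρ1) (moment_nonneg ..)

end IsFiniteMeasure

variable [IsProbabilityMeasure μ]

theorem one_le_moment (hμ : IsUltraspherical_s13 μ ν) (hν : 0 ≤ ν) (hk : 1 ≤ k) (ρ : ℝ) :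
    1 ≤ moment μ k ρ := by
  have hx : Integrable (fun x : Set.Icc (-1 : ℝ) 1 => (x : ℝ)) μ :=
    integrable_of_continuous continuous_subtype_val
  have hmean : ∫ x, (1 + k * ρ ^ 2 + 2 * k * ρ * (x : ℝ)) ∂μ = 1 + k * ρ ^ 2 := by
    rw [integral_add (integrable_const _) (hx.const_mul _), integral_const_mul,
      hμ.integral_eq_zero hν]
    simp
  have hbernoulli : ∫ x, (1 + k * ρ ^ 2 + 2 * k * ρ * (x : ℝ)) ∂μ ≤ moment μ k ρ := by
    refine integral_mono ((integrable_const _).add (hx.const_mul _))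
      (integrable_normSqAdd_rpow (.inr (by linarith))) fun x => ?_
    have h := one_add_mul_self_le_rpow_one_add (s := normSqAdd ρ x - 1)
      (by linarith [normSqAdd_nonneg x.2 ρ]) hk
    rw [add_sub_cancel] at h
    refine le_trans (le_of_eq ?_) h
    rw [normSqAdd]
    ring
  have := mul_nonneg (zero_le_one.trans hk) (sq_nonneg ρ)
  linarith

theorem moment_pos (hμ : IsUltraspherical_s13 μ ν) (hν : 0 ≤ ν) (hk : 1 ≤ k) (ρ : ℝ) :
    0 < moment μ k ρ :=
  one_pos.trans_le (hμ.one_le_moment hν hk ρ)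

theorem one_sub_le_mul_momentRatio (hμ : IsUltraspherical_s13 μ ν) (hν : 0 ≤ ν) (hk : 1 ≤ k)
    (hρ : 0 ≤ ρ) (hρ1 : ρ ≤ 1) : 1 - ρ ≤ (1 + ρ) * momentRatio μ k ρ := by
  rw [momentRatio, ← mul_div_assoc, le_div_iff₀ (hμ.moment_pos hν hk ρ)]
  have := mul_le_mul_of_nonneg_left (moment_le_sq_mul_moment_sub_one (μ := μ) hk hρ)
    (sub_nonneg.2 hρ1)
  linarith

theorem continuous_momentRatio (hμ : IsUltraspherical_s13 μ ν) (hν : 0 ≤ ν) (hk : 1 ≤ k) :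
    Continuous (momentRatio μ k) :=
  ((by fun_prop : Continuous fun ρ : ℝ => 1 - ρ ^ 2).mul
    (continuous_moment (by linarith))).div (continuous_moment (by linarith))
    fun ρ => (hμ.moment_pos hν hk ρ).ne'

theorem hasDerivAt_log_moment (hμ : IsUltraspherical_s13 μ ν) (hν : 0 ≤ ν) (hk : 1 ≤ k)
    (hρ : ρ ≠ 0) :
    HasDerivAt (fun ρ => Real.log (moment μ k ρ)) (k * (1 - momentRatio μ k ρ) / ρ) ρ := by
  have h0 := hμ.moment_pos hν hk ρ
  refine ((hasDerivAt_moment hρ (.inr hk)).log h0.ne').congr_deriv ?_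
  rw [momentRatio]
  field_simp

theorem hasDerivAt_momentRatio (hμ : IsUltraspherical_s13 μ ν) (hν : 0 ≤ ν) (hk : 1 ≤ k)
    (hρ : 0 < ρ) (hρ1 : ρ < 1) :
    HasDerivAt (momentRatio μ k) (riccatiField ν k ρ (momentRatio μ k ρ) / ρ) ρ := by
  have h0 := hμ.moment_pos hν hk ρ
  have hz : 0 < 1 - ρ ^ 2 := by nlinarith
  have hρ' : |ρ| ≠ 1 := by rw [abs_of_pos hρ]; exact hρ1.ne
  have hrec := hμ.moment_recurrence hρ' k
  have hsq : HasDerivAt (fun ρ : ℝ => 1 - ρ ^ 2) (-(2 * ρ)) ρ := by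
    simpa using (hasDerivAt_pow 2 ρ).const_sub 1
  refine ((hsq.mul (hasDerivAt_moment hρ.ne' (.inl hρ'))).div
    (hasDerivAt_moment hρ.ne' (.inl hρ')) h0.ne').congr_deriv ?_
  rw [sub_sub, one_add_one_eq_two]
  simp only [riccatiField, momentRatio, Pi.mul_apply]
  generalize moment μ k ρ = A at *
  generalize moment μ (k - 1) ρ = B at *
  generalize moment μ (k - 2) ρ = C at *
  field_simp
  linear_combination -A * hrec

theorem momentRatio_le_of_riccatiField_le (hμ : IsUltraspherical_s13 μ ν) (hν : 0 ≤ ν) (hk : 1 ≤ k)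
    (hl : 1 ≤ l) (ha : 0 < a) (ha1 : a ≤ 1) (hb : 0 < b) (hb1 : b ≤ 1)
    (h : ∀ s ∈ Set.Ioo (0 : ℝ) 1, momentRatio μ l (b * s) < momentRatio μ k (a * s) →
      riccatiField ν k (a * s) (momentRatio μ k (a * s)) ≤
        riccatiField ν l (b * s) (momentRatio μ l (b * s))) :
    momentRatio μ k a ≤ momentRatio μ l b := by
  have hcont {k c : ℝ} (hk : 1 ≤ k) : Continuous fun s => momentRatio μ k (c * s) :=
    (hμ.continuous_momentRatio hν hk).comp (continuous_const_mul c)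
  have hderiv {k c s : ℝ} (hk : 1 ≤ k) (hc : 0 < c) (hc1 : c ≤ 1) (hs : s ∈ Set.Ioo (0 : ℝ) 1) :
      HasDerivAt (fun s => momentRatio μ k (c * s))
        (riccatiField ν k (c * s) (momentRatio μ k (c * s)) / s) s := by
    refine ((hμ.hasDerivAt_momentRatio hν hk (mul_pos hc hs.1)
      (mul_lt_one_of_nonneg_of_lt_one_right hc1 hs.1.le hs.2)).comp s
      (hasDerivAt_const_mul c)).congr_deriv ?_
    have := hs.1
    field_simp
  have hle := le_of_hasDerivAt_le_of_lt zero_le_one (hcont (c := a) hk).continuousOn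
    (hcont (c := b) hl).continuousOn (fun s hs => hderiv hk ha ha1 hs)
    (fun s hs => hderiv hl hb hb1 hs) (by simp [momentRatio_zero_right])
    fun s hs hlt => div_le_div_of_nonneg_right (h s hs hlt) hs.1.le
  simpa only [mul_one] using hle

theorem momentRatio_le_of_mul_sq_le_of_le_one (hμ : IsUltraspherical_s13 μ ν) (hν : 0 ≤ ν)
    (hk : 1 ≤ k) (hkl : k ≤ l) (ha : 0 < a) (ha1 : a ≤ 1) (hb : 0 < b)
    (hab : (l + ν) * b ^ 2 ≤ (k + ν) * a ^ 2) : momentRatio μ k a ≤ momentRatio μ l b := by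
  have hba : b ≤ a := le_of_mul_sq_le_mul_sq (by linarith) (by linarith) ha.le hab
  refine hμ.momentRatio_le_of_riccatiField_le hν hk (hk.trans hkl) ha ha1 hb (hba.trans ha1)
    fun s ⟨hs0, hs1⟩ hlt => ?_
  have has : a * s < 1 := mul_lt_one_of_nonneg_of_lt_one_right ha1 hs0.le hs1
  have hbs : b * s < 1 := (mul_le_mul_of_nonneg_right hba hs0.le).trans_lt has
  refine riccatiField_le_riccatiField_of_mul_sq_le hν (by linarith) hkl (by positivity) has
    (by positivity) ?_ (momentRatio_nonneg (by positivity) hbs.le) hlt.le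
    (hμ.momentRatio_le_one hν hk (by positivity) has)
  rw [mul_pow, mul_pow, ← mul_assoc, ← mul_assoc]
  gcongr

theorem momentRatio_le_of_le (hμ : IsUltraspherical_s13 μ ν) (hν : 0 ≤ ν) (hk : 1 ≤ k) (hkl : k ≤ l)
    (ha : 0 < a) (hab : a ≤ b) (hb1 : b ≤ 1) : momentRatio μ l b ≤ momentRatio μ k a := by
  have hl : 1 ≤ l := hk.trans hkl
  have hb : 0 < b := ha.trans_le hab
  refine hμ.momentRatio_le_of_riccatiField_le hν hl hk hb hb1 ha (hab.trans hb1)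
    fun s ⟨hs0, hs1⟩ hlt => ?_
  have hbs : b * s < 1 := mul_lt_one_of_nonneg_of_lt_one_right hb1 hs0.le hs1
  have habs : a * s ≤ b * s := by gcongr
  have has : a * s < 1 := habs.trans_lt hbs
  calc riccatiField ν l (b * s) (momentRatio μ l (b * s))
      ≤ riccatiField ν l (a * s) (momentRatio μ k (a * s)) :=
        riccatiField_le_riccatiField_of_mul_sq_le hν (by linarith) le_rfl (by positivity) hbs
          (by positivity) (by gcongr) (momentRatio_nonneg (by positivity) has.le)
          hlt.le (hμ.momentRatio_le_one hν hl (by positivity) hbs)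
    _ ≤ riccatiField ν k (a * s) (momentRatio μ k (a * s)) :=
        riccatiField_anti_left hkl (by positivity) has
          (hμ.one_sub_le_mul_momentRatio hν hk (by positivity) has.le)
          (hμ.momentRatio_le_one hν hk (by positivity) has)

theorem momentRatio_le_of_mul_sq_le (hμ : IsUltraspherical_s13 μ ν) (hν : 0 ≤ ν)
    (hk : 1 ≤ k) (hkl : k ≤ l) (ha : 0 < a) (hb : 0 < b)
    (hab : (l + ν) * b ^ 2 ≤ (k + ν) * a ^ 2) : momentRatio μ k a ≤ momentRatio μ l b := by
  have hba : b ≤ a := le_of_mul_sq_le_mul_sq (by linarith) (by linarith) ha.le hab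
  rcases le_total a 1 with ha1 | ha1
  · exact hμ.momentRatio_le_of_mul_sq_le_of_le_one hν hk hkl ha ha1 hb hab
  rcases le_total b 1 with hb1 | hb1
  · exact (momentRatio_nonpos ha1).trans (momentRatio_nonneg hb.le hb1)
  · have hinv := hμ.momentRatio_le_of_le hν hk hkl (inv_pos.2 ha) (inv_anti₀ hb hba)
      (inv_le_one_of_one_le₀ hb1)
    rwa [momentRatio_inv ha.ne', momentRatio_inv hb.ne', neg_le_neg_iff] at hinv

theorem log_moment_div_le (hμ : IsUltraspherical_s13 μ ν) (hν : 0 ≤ ν) (hk : 1 ≤ k) (hkl : k ≤ l)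
    (ha : 0 ≤ a) (hb : 0 < b) (hab : (l + ν) * b ^ 2 ≤ (k + ν) * a ^ 2) :
    Real.log (moment μ l b) / l ≤ Real.log (moment μ k a) / k := by
  have hl : 1 ≤ l := hk.trans hkl
  have ha' : 0 < a := by
    refine ha.lt_of_ne' fun h0 => hab.not_gt ?_
    rw [h0, zero_pow two_ne_zero, mul_zero]
    positivity
  have hcont {k c : ℝ} (hk : 1 ≤ k) : Continuous fun s => Real.log (moment μ k (c * s)) / k :=
    (((continuous_moment (by linarith)).comp (continuous_const_mul c)).log
      fun s => (hμ.moment_pos hν hk _).ne').div_const k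
  have hderiv {k c s : ℝ} (hk : 1 ≤ k) (hc : 0 < c) (hs : 0 < s) :
      HasDerivAt (fun s => Real.log (moment μ k (c * s)) / k)
        ((1 - momentRatio μ k (c * s)) / s) s := by
    refine (((hμ.hasDerivAt_log_moment hν hk (by positivity)).comp s
      (hasDerivAt_const_mul c)).div_const k).congr_deriv ?_
    field_simp
  have hle := le_of_hasDerivAt_le_of_lt zero_le_one (hcont (c := b) hl).continuousOn
    (hcont (c := a) hk).continuousOn (fun s hs => hderiv hl hb hs.1)
    (fun s hs => hderiv hk ha' hs.1) (by simp [moment_zero_right]) fun s ⟨hs, _⟩ _ => ?_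
  · simpa only [mul_one] using hle
  refine div_le_div_of_nonneg_right (sub_le_sub_left ?_ 1) hs.le
  refine hμ.momentRatio_le_of_mul_sq_le hν hk hkl (by positivity) (by positivity) ?_
  rw [mul_pow, mul_pow, ← mul_assoc, ← mul_assoc]
  gcongr

theorem moment_rpow_inv_le (hμ : IsUltraspherical_s13 μ ν) (hν : 0 ≤ ν) (hk : 1 ≤ k) (hkl : k ≤ l)
    (ha : 0 ≤ a) (hb : 0 ≤ b) (hab : (l + ν) * b ^ 2 ≤ (k + ν) * a ^ 2) :
    moment μ l b ^ l⁻¹ ≤ moment μ k a ^ k⁻¹ := by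
  have hl : 1 ≤ l := hk.trans hkl
  rcases hb.eq_or_lt with rfl | hb
  · rw [moment_zero_right, Real.one_rpow]
    exact Real.one_le_rpow (hμ.one_le_moment hν hk a) (by positivity)
  · rw [Real.rpow_def_of_pos (hμ.moment_pos hν hl b), Real.rpow_def_of_pos
      (hμ.moment_pos hν hk a), ← div_eq_mul_inv, ← div_eq_mul_inv]
    exact Real.exp_le_exp.2 (hμ.log_moment_div_le hν hk hkl ha hb hab)

end IsUltraspherical_s13

section Rotation

variable {𝕜 V ι : Type*} [RCLike 𝕜] [NormedAddCommGroup V] [InnerProductSpace 𝕜 V]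

theorem exists_linearIsometryEquiv_apply_eq_of_orthonormal [FiniteDimensional 𝕜 V] {v w : ι → V}
    (hv : Orthonormal 𝕜 v) (hw : Orthonormal 𝕜 w) : ∃ R : V ≃ₗᵢ[𝕜] V, ∀ i, R (v i) = w i := by
  let b := Module.Basis.span hv.linearIndependent
  have hb (i) : (b i : V) = v i := by simp [b, Module.Basis.span_apply]
  have hbv : Orthonormal 𝕜 b := by
    rw [← Submodule.subtypeₗᵢ _ |>.orthonormal_comp_iff]
    convert hv using 1
    exact funext hb
  let L := (b.constr 𝕜 w).isometryOfOrthonormal hbv (by convert hw using 1; ext i; simp)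
  refine ⟨L.extend.toLinearIsometryEquiv rfl, fun i => ?_⟩
  rw [LinearIsometry.coe_toLinearIsometryEquiv, ← hb, LinearIsometry.extend_apply]
  simp [L]

theorem exists_orthonormalBasis_apply_zero_eq [FiniteDimensional 𝕜 V] {d : ℕ}
    (hd : Module.finrank 𝕜 V = d + 1) {e : V} (he : ‖e‖ = 1) :
    ∃ b : OrthonormalBasis (Fin (d + 1)) 𝕜 V, b 0 = e := by
  have he' : Orthonormal 𝕜 (({0} : Set (Fin (d + 1))).domRestrict fun _ => e) :=
    ⟨fun _ => he, fun i j hij => (hij (Subsingleton.elim i j)).elim⟩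
  obtain ⟨b, hb⟩ := he'.exists_orthonormalBasis_extension_of_card_eq (by simpa using hd)
  exact ⟨b, hb 0 rfl⟩

end Rotation

section RotatePair

variable {E : Type*} [NormedAddCommGroup E] [InnerProductSpace ℝ E] {v : Fin 2 → E}

/-- The pair of vectors `v`, if orthonormal, rotated by the angle `φ` in the plane it spans. -/
noncomputable def rotatePair (v : Fin 2 → E) (φ : ℝ) : Fin 2 → E :=
  ![Real.cos φ • v 0 + Real.sin φ • v 1, Real.cos φ • v 1 - Real.sin φ • v 0]

theorem rotatePair_zero (v : Fin 2 → E) : rotatePair v 0 = v := by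
  ext i
  fin_cases i <;> simp [rotatePair]

theorem continuous_rotatePair (v : Fin 2 → E) : Continuous (rotatePair v) := by
  refine continuous_pi fun i => ?_
  fin_cases i <;> simp only [rotatePair] <;> fun_prop

theorem orthonormal_rotatePair (hv : Orthonormal ℝ v) (φ : ℝ) : Orthonormal ℝ (rotatePair v φ) := by
  have hcs := Real.cos_sq_add_sin_sq φ
  have hv' := orthonormal_iff_ite.1 hv
  rw [orthonormal_iff_ite]
  simp only [rotatePair, Fin.forall_fin_two, Matrix.cons_val_zero, Matrix.cons_val_one,
    inner_add_left, inner_add_right, inner_sub_left, inner_sub_right, real_inner_smul_left,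
    real_inner_smul_right, hv']
  simp only [Fin.isValue, if_true, if_false, one_ne_zero, zero_ne_one, mul_one, mul_zero]
  exact ⟨⟨by linear_combination hcs, by ring⟩, by ring, by linear_combination hcs⟩

theorem hasDerivAt_rotatePair_apply_zero (v : Fin 2 → E) (φ : ℝ) :
    HasDerivAt (rotatePair v · 0) (rotatePair v φ 1) φ :=
  (((Real.hasDerivAt_cos φ).smul_const (v 0)).add
    ((Real.hasDerivAt_sin φ).smul_const (v 1))).congr_deriv
      (by simp only [rotatePair, Matrix.cons_val_one, Matrix.cons_val_fin_one]; module)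

theorem hasDerivAt_rotatePair_apply_one (v : Fin 2 → E) (φ : ℝ) :
    HasDerivAt (rotatePair v · 1) (-rotatePair v φ 0) φ :=
  (((Real.hasDerivAt_cos φ).smul_const (v 1)).sub
    ((Real.hasDerivAt_sin φ).smul_const (v 0))).congr_deriv
      (by simp only [rotatePair, Matrix.cons_val_zero]; module)

theorem hasDerivAt_inner_rotatePair_mul_comp (y : E) {h : ℝ → ℝ} {h' φ : ℝ}
    (hh : HasDerivAt h h' (inner ℝ (rotatePair v φ 0) y)) :
    HasDerivAt (fun φ => inner ℝ (rotatePair v φ 1) y * h (inner ℝ (rotatePair v φ 0) y))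
      (inner ℝ (rotatePair v φ 1) y ^ 2 * h' -
        inner ℝ (rotatePair v φ 0) y * h (inner ℝ (rotatePair v φ 0) y)) φ := by
  have hu := (hasDerivAt_rotatePair_apply_zero v φ).inner ℝ (hasDerivAt_const φ y)
  have hw := (hasDerivAt_rotatePair_apply_one v φ).inner ℝ (hasDerivAt_const φ y)
  refine (hw.mul (hh.comp φ hu)).congr_deriv ?_
  simp only [Function.comp, inner_zero_right, inner_neg_left, zero_add]
  ring

theorem norm_add_smul_sq_eq_normSqAdd {e y : E} (he : ‖e‖ = 1) (hy : ‖y‖ = 1) (ρ : ℝ) :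
    ‖e + ρ • y‖ ^ 2 = normSqAdd ρ (inner ℝ e y) := by
  rw [norm_add_sq_real, norm_smul, inner_smul_right, he, hy, normSqAdd, mul_pow, Real.norm_eq_abs,
    sq_abs]
  ring

end RotatePair

section RotationInvariant

variable {E : Type*} [NormedAddCommGroup E] [InnerProductSpace ℝ E] [MeasurableSpace E]

/-- A measure on the unit sphere is rotation invariant if all linear isometries preserve it. The
condition is imposed on its pushforward to the ambient space. -/
def IsRotationInvariant (μ : Measure (sphere (0 : E) 1)) : Prop :=
  ∀ R : E ≃ₗᵢ[ℝ] E, MeasurePreserving R (μ.map (↑)) (μ.map (↑))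

theorem IsRotationInvariant.smul {μ : Measure (sphere (0 : E) 1)} (hμ : IsRotationInvariant μ)
    (c : ENNReal) : IsRotationInvariant (c • μ) := fun R => by
  rw [Measure.map_smul]
  exact (hμ R).smul_measure c

theorem rpow_integral_norm_zero_add_smul_rpow (μ : Measure (sphere (0 : E) 1))
    [IsProbabilityMeasure μ] {p : ℝ} (hp : p ≠ 0) (a : ℝ) :
    (∫ y : sphere (0 : E) 1, ‖0 + a • (y : E)‖ ^ p ∂μ) ^ (1 / p) = |a| := by
  simp only [zero_add, norm_smul, norm_eq_of_mem_sphere, mul_one, integral_const, probReal_univ,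
    one_smul, Real.norm_eq_abs]
  rw [one_div, Real.rpow_rpow_inv (abs_nonneg a) hp]

variable [BorelSpace E]

/-- The inner product of two points of the unit sphere, as a point of `[-1, 1]`. -/
def sphereInner (e y : sphere (0 : E) 1) : Set.Icc (-1 : ℝ) 1 :=
  ⟨inner ℝ (e : E) y, real_inner_mem_Icc_of_norm_eq_one (norm_eq_of_mem_sphere e)
    (norm_eq_of_mem_sphere y)⟩

/-- The law of the inner product of `e` with a random point of the unit sphere of law `μ`. -/
noncomputable def coordinateLaw (μ : Measure (sphere (0 : E) 1)) (e : sphere (0 : E) 1) :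
    Measure (Set.Icc (-1 : ℝ) 1) :=
  μ.map (sphereInner e)

theorem measurable_sphereInner (e : sphere (0 : E) 1) : Measurable (sphereInner e) := by
  refine Continuous.measurable ?_
  unfold sphereInner
  fun_prop

instance isProbabilityMeasure_coordinateLaw (μ : Measure (sphere (0 : E) 1))
    [IsProbabilityMeasure μ] (e : sphere (0 : E) 1) : IsProbabilityMeasure (coordinateLaw μ e) :=
  Measure.isProbabilityMeasure_map (measurable_sphereInner e).aemeasurable

theorem integral_coordinateLaw {f : ℝ → ℝ} (hf : ContinuousOn f (Set.Icc (-1) 1))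
    (μ : Measure (sphere (0 : E) 1)) (e : sphere (0 : E) 1) :
    ∫ x, f x ∂coordinateLaw μ e = ∫ y : sphere (0 : E) 1, f (inner ℝ (e : E) y) ∂μ :=
  integral_map (measurable_sphereInner e).aemeasurable
    (hf.comp_continuous continuous_subtype_val fun x => x.2).aestronglyMeasurable_of_compactSpace

theorem hasDerivAt_integral_inner_rotatePair_mul_comp (μ : Measure (sphere (0 : E) 1))
    [CompactSpace (sphere (0 : E) 1)] [IsFiniteMeasure μ] {v : Fin 2 → E} (hv : Orthonormal ℝ v)
    {h h' : ℝ → ℝ} (hh' : ContinuousOn h' (Set.Icc (-1) 1))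
    (hh : ∀ x ∈ Set.Icc (-1 : ℝ) 1, HasDerivAt h (h' x) x) (φ : ℝ) :
    HasDerivAt (fun φ => ∫ y : sphere (0 : E) 1,
        inner ℝ (rotatePair v φ 1) (y : E) * h (inner ℝ (rotatePair v φ 0) (y : E)) ∂μ)
      (∫ y : sphere (0 : E) 1,
          inner ℝ (rotatePair v φ 1) (y : E) ^ 2 * h' (inner ℝ (rotatePair v φ 0) (y : E)) ∂μ -
        ∫ y : sphere (0 : E) 1,
          inner ℝ (rotatePair v φ 0) (y : E) * h (inner ℝ (rotatePair v φ 0) (y : E)) ∂μ) φ := by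
  have hmem (φ) (y : sphere (0 : E) 1) :
      inner ℝ (rotatePair v φ 0) (y : E) ∈ Set.Icc (-1 : ℝ) 1 :=
    real_inner_mem_Icc_of_norm_eq_one ((orthonormal_rotatePair hv φ).1 0) (norm_eq_of_mem_sphere y)
  have hinner (i) : Continuous fun z : ℝ × sphere (0 : E) 1 =>
      inner ℝ (rotatePair v z.1 i) (z.2 : E) :=
    (((continuous_apply i).comp (continuous_rotatePair v)).comp continuous_fst).inner
      (continuous_subtype_val.comp continuous_snd)
  have hcomp {g : ℝ → ℝ} (hg : ContinuousOn g (Set.Icc (-1) 1)) :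
      Continuous fun z : ℝ × sphere (0 : E) 1 => g (inner ℝ (rotatePair v z.1 0) (z.2 : E)) :=
    hg.comp_continuous (hinner 0) fun z => hmem z.1 z.2
  have hF := (hinner 1).fun_mul (hcomp (HasDerivAt.continuousOn hh))
  have hG := (hinner 0).fun_mul (hcomp (HasDerivAt.continuousOn hh))
  have hF' := ((hinner 1).fun_pow 2).fun_mul (hcomp hh')
  have hslice {F : ℝ × sphere (0 : E) 1 → ℝ} (hF : Continuous F) (φ : ℝ) :
      Continuous fun y => F (φ, y) := hF.comp (.prodMk_right φ)
  rw [← integral_sub (integrable_of_continuous (hslice hF' φ))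
    (integrable_of_continuous (hslice hG φ))]
  refine hasDerivAt_integral_of_continuousOn Filter.univ_mem (fun φ _ => hslice hF φ) ?_
    fun φ _ y => hasDerivAt_inner_rotatePair_mul_comp (y : E) (hh _ (hmem φ y))
  exact (hF'.fun_sub hG).continuousOn

theorem integral_norm_add_smul_rpow (μ : Measure (sphere (0 : E) 1)) (e : sphere (0 : E) 1)
    {p : ℝ} (hp : 0 ≤ p) (ρ : ℝ) :
    ∫ y : sphere (0 : E) 1, ‖(e : E) + ρ • (y : E)‖ ^ p ∂μ =
      moment (coordinateLaw μ e) (p / 2) ρ := by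
  have hcont : ContinuousOn (fun x => normSqAdd ρ x ^ (p / 2)) (Set.Icc (-1) 1) :=
    ContinuousOn.rpow_const (by fun_prop) fun _ _ => .inr (by positivity)
  rw [moment, integral_coordinateLaw hcont]
  congr 1 with y
  rw [← norm_add_smul_sq_eq_normSqAdd (norm_eq_of_mem_sphere e) (norm_eq_of_mem_sphere y),
    ← Real.rpow_natCast_mul (norm_nonneg _)]
  congr 1
  push_cast
  ring

namespace IsRotationInvariant

variable {μ : Measure (sphere (0 : E) 1)}

theorem integral_comp (hμ : IsRotationInvariant μ) (R : E ≃ₗᵢ[ℝ] E) (F : E → ℝ) :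
    ∫ y, F (R y) ∂μ = ∫ y, F y ∂μ := by
  have hval : MeasurableEmbedding ((↑) : sphere (0 : E) 1 → E) :=
    .subtype_coe isClosed_sphere.measurableSet
  have hR := (hμ R).integral_comp R.toHomeomorph.measurableEmbedding F
  rwa [hval.integral_map, hval.integral_map] at hR

theorem integral_norm_add_smul_rpow_abs (hμ : IsRotationInvariant μ) (x : E) (a p : ℝ) :
    ∫ y : sphere (0 : E) 1, ‖x + |a| • (y : E)‖ ^ p ∂μ =
      ∫ y : sphere (0 : E) 1, ‖x + a • (y : E)‖ ^ p ∂μ := by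
  rcases abs_choice a with ha | ha
  · rw [ha]
  · rw [← hμ.integral_comp (.neg ℝ) fun y => ‖x + a • y‖ ^ p]
    simp [ha]

theorem integral_norm_smul_add_smul_rpow (hμ : IsRotationInvariant μ) (e : sphere (0 : E) 1)
    {c p : ℝ} (hc : 0 < c) (hp : 0 ≤ p) (a : ℝ) :
    ∫ y : sphere (0 : E) 1, ‖c • (e : E) + a • (y : E)‖ ^ p ∂μ =
      c ^ p * moment (coordinateLaw μ e) (p / 2) (|a| / c) := by
  rw [← integral_norm_add_smul_rpow μ e hp, ← integral_const_mul,
    ← hμ.integral_norm_add_smul_rpow_abs]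
  congr 1 with y
  rw [← Real.mul_rpow hc.le (norm_nonneg _), ← norm_smul_of_nonneg hc.le, smul_add, smul_smul,
    mul_div_cancel₀ _ hc.ne']

theorem rpow_integral_norm_smul_add_smul_rpow (hμ : IsRotationInvariant μ) (e : sphere (0 : E) 1)
    {c p : ℝ} (hc : 0 < c) (hp : 0 < p) (a : ℝ) :
    (∫ y : sphere (0 : E) 1, ‖c • (e : E) + a • (y : E)‖ ^ p ∂μ) ^ (1 / p) =
      c * (moment (coordinateLaw μ e) (p / 2) (|a| / c) ^ (p / 2)⁻¹) ^ (1 / 2 : ℝ) := by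
  have hm := moment_nonneg (coordinateLaw μ e) (p / 2) (|a| / c)
  rw [hμ.integral_norm_smul_add_smul_rpow e hc hp.le, Real.mul_rpow (by positivity) hm, one_div,
    Real.rpow_rpow_inv hc.le hp.ne', ← Real.rpow_mul hm]
  congr 2
  field_simp

variable [FiniteDimensional ℝ E]

theorem integral_comp_inner {ι : Type*} (hμ : IsRotationInvariant μ) {v w : ι → E}
    (hv : Orthonormal ℝ v) (hw : Orthonormal ℝ w) (G : (ι → ℝ) → ℝ) :
    ∫ y, G (fun i => inner ℝ (v i) (y : E)) ∂μ = ∫ y, G (fun i => inner ℝ (w i) (y : E)) ∂μ := by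
  obtain ⟨R, hR⟩ := exists_linearIsometryEquiv_apply_eq_of_orthonormal hv hw
  rw [← hμ.integral_comp R fun y => G fun i => inner ℝ (w i) y]
  simp only [← hR, R.inner_map_map]

theorem integral_inner_mul [IsFiniteMeasure μ] (hμ : IsRotationInvariant μ) {v : Fin 2 → E}
    (hv : Orthonormal ℝ v) {h h' : ℝ → ℝ} (hh' : ContinuousOn h' (Set.Icc (-1) 1))
    (hh : ∀ x ∈ Set.Icc (-1 : ℝ) 1, HasDerivAt h (h' x) x) :
    ∫ y : sphere (0 : E) 1, inner ℝ (v 0) (y : E) * h (inner ℝ (v 0) (y : E)) ∂μ =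
      ∫ y : sphere (0 : E) 1, inner ℝ (v 1) (y : E) ^ 2 * h' (inner ℝ (v 0) (y : E)) ∂μ := by
  have hconst (φ : ℝ) := hμ.integral_comp_inner (orthonormal_rotatePair hv φ) hv
    fun t => t 1 * h (t 0)
  have hderiv := (hasDerivAt_integral_inner_rotatePair_mul_comp μ hv hh' hh 0)
  simp only [hconst, rotatePair_zero] at hderiv
  have hzero := hderiv.unique (hasDerivAt_const 0 _)
  exact (sub_eq_zero.1 hzero).symm

theorem isUltraspherical_coordinateLaw [IsFiniteMeasure μ] (hμ : IsRotationInvariant μ)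
    (e : sphere (0 : E) 1) :
    IsUltraspherical_s13 (coordinateLaw μ e) (Module.finrank ℝ E / 2 - 1) := by
  intro h h' hh' hh
  have : Nontrivial E := ⟨e, 0, ne_zero_of_mem_unit_sphere e⟩
  obtain ⟨d, hd⟩ := Nat.exists_eq_succ_of_ne_zero (Module.finrank_pos (R := ℝ) (M := E)).ne'
  obtain ⟨b, hb⟩ := exists_orthonormalBasis_apply_zero_eq hd (norm_eq_of_mem_sphere e)
  have hpair (i : Fin d) : Orthonormal ℝ ![b 0, b i.succ] := by
    convert b.orthonormal.comp ![0, i.succ] _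
    · ext j; fin_cases j <;> rfl
    · simp [Function.Injective, Fin.forall_fin_two, Fin.succ_ne_zero, (Fin.succ_ne_zero _).symm]
  have hparseval (y : sphere (0 : E) 1) :
      1 - inner ℝ (e : E) y ^ 2 = ∑ i : Fin d, inner ℝ (b i.succ) (y : E) ^ 2 := by
    have hy := b.sum_sq_inner_right (y : E)
    rw [norm_eq_of_mem_sphere, Fin.sum_univ_succ, hb] at hy
    linarith
  have hparts (i : Fin d) := hμ.integral_inner_mul (hpair i) hh' hh
  simp only [Matrix.cons_val_zero, Matrix.cons_val_one, hb] at hparts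
  rw [integral_coordinateLaw (f := fun x => x * h x)
      (continuousOn_id.mul (HasDerivAt.continuousOn hh)),
    integral_coordinateLaw (f := fun x => (1 - x ^ 2) * h' x)
      (ContinuousOn.mul (by fun_prop) hh')]
  simp only [hparseval, Finset.sum_mul]
  rw [integral_finsetSum]
  · simp only [← hparts, Finset.sum_const, Finset.card_univ, Fintype.card_fin, nsmul_eq_mul, hd]
    push_cast
    ring
  · intro i _
    exact integrable_of_continuous (Continuous.mul (by fun_prop)
      (hh'.comp_continuous (by fun_prop) fun y => (sphereInner e y).2))

theorem rpow_integral_norm_smul_add_smul_le [IsProbabilityMeasure μ] (hμ : IsRotationInvariant μ)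
    (hE : 2 ≤ Module.finrank ℝ E) (e : sphere (0 : E) 1) {a b c p q : ℝ} (hc : 0 < c) (hp : 2 ≤ p)
    (hpq : p ≤ q)
    (hab : (q + Module.finrank ℝ E - 2) * b ^ 2 ≤ (p + Module.finrank ℝ E - 2) * a ^ 2) :
    (∫ y : sphere (0 : E) 1, ‖c • (e : E) + b • (y : E)‖ ^ q ∂μ) ^ (1 / q) ≤
      (∫ y : sphere (0 : E) 1, ‖c • (e : E) + a • (y : E)‖ ^ p ∂μ) ^ (1 / p) := by
  have hν : (0 : ℝ) ≤ Module.finrank ℝ E / 2 - 1 := by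
    have : (2 : ℝ) ≤ Module.finrank ℝ E := by exact_mod_cast hE
    linarith
  have hab' : (q / 2 + (Module.finrank ℝ E / 2 - 1)) * (|b| / c) ^ 2 ≤
      (p / 2 + (Module.finrank ℝ E / 2 - 1)) * (|a| / c) ^ 2 := by
    rw [div_pow, div_pow, sq_abs, sq_abs, ← sub_nonneg]
    have := div_nonneg (sub_nonneg.2 hab) (by positivity : 0 ≤ 2 * c ^ 2)
    exact this.trans_eq (by field_simp; ring)
  have hmoment := (hμ.isUltraspherical_coordinateLaw e).moment_rpow_inv_le hν
    (k := p / 2) (l := q / 2) (by linarith) (by linarith) (by positivity) (by positivity) hab'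
  have := Real.rpow_nonneg (moment_nonneg (coordinateLaw μ e) (q / 2) (|b| / c)) (q / 2)⁻¹
  rw [hμ.rpow_integral_norm_smul_add_smul_rpow e hc (by linarith),
    hμ.rpow_integral_norm_smul_add_smul_rpow e hc (by linarith)]
  gcongr

end IsRotationInvariant

open scoped Pointwise in
theorem isRotationInvariant_toSphere [FiniteDimensional ℝ E] :
    IsRotationInvariant (volume : Measure E).toSphere := by
  refine fun R => ⟨R.continuous.measurable, Measure.ext fun s hs => ?_⟩
  have hval : Measurable ((↑) : sphere (0 : E) 1 → E) := measurable_subtype_coe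
  have hRs : MeasurableSet (R ⁻¹' s) := R.continuous.measurable hs
  have hcone : Set.Ioo (0 : ℝ) 1 • (R ⁻¹' s ∩ sphere 0 1) =
      R ⁻¹' (Set.Ioo (0 : ℝ) 1 • (s ∩ sphere 0 1)) := by
    ext x
    simp only [Set.mem_smul, Set.mem_preimage, Set.mem_inter_iff]
    refine exists_congr fun c => and_congr_right fun _ => ?_
    refine .trans ?_ R.surjective.exists.symm
    simp only [← R.map_smul, R.injective.eq_iff, mem_sphere_zero_iff_norm, R.norm_map]
  rw [Measure.map_apply R.continuous.measurable hs, Measure.map_apply hval hRs,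
    Measure.map_apply hval hs, Measure.toSphere_apply' _ (hval hRs),
    Measure.toSphere_apply' _ (hval hs), Subtype.image_preimage_coe, Subtype.image_preimage_coe,
    Set.inter_comm, hcone, Set.inter_comm,
    R.measurePreserving.measure_preimage_emb R.toHomeomorph.measurableEmbedding]

end RotationInvariant

theorem isRotationInvariant_sphereHaar (n : ℕ) : IsRotationInvariant (sphereHaar n) :=
  isRotationInvariant_toSphere.smul _

instance isProbabilityMeasure_sphereHaar_s13 (n : ℕ) [NeZero n] :
    IsProbabilityMeasure (sphereHaar n) :=
  ⟨by
    rw [sphereHaar, Measure.smul_apply, smul_eq_mul]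
    exact ENNReal.inv_mul_cancel
      (Measure.measure_univ_eq_zero.not.2 (Measure.toSphere_ne_zero _)) (measure_ne_top _ _)⟩

theorem stmt_13_general {E : Type*} [NormedAddCommGroup E] [InnerProductSpace ℝ E]
    [FiniteDimensional ℝ E] [MeasurableSpace E] [BorelSpace E] {μ : Measure (sphere (0 : E) 1)}
    [IsProbabilityMeasure μ] (hμ : IsRotationInvariant μ) (hE : 2 ≤ Module.finrank ℝ E)
    {p q r : ℝ} (hp : 2 ≤ p) (hpq : p ≤ q)
    (hr : |r| ≤ √((p + Module.finrank ℝ E - 2) / (q + Module.finrank ℝ E - 2))) (x : E) (a : ℝ) :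
    (∫ y : sphere (0 : E) 1, ‖x + (a * r) • (y : E)‖ ^ q ∂μ) ^ (1 / q) ≤
      (∫ y : sphere (0 : E) 1, ‖x + a • (y : E)‖ ^ p ∂μ) ^ (1 / p) := by
  have hE' : (2 : ℝ) ≤ Module.finrank ℝ E := by exact_mod_cast hE
  rcases eq_or_ne x 0 with rfl | hx
  · have hr1 : |r| ≤ 1 :=
      hr.trans (Real.sqrt_le_one.2 ((div_le_one (by linarith)).2 (by linarith)))
    rw [rpow_integral_norm_zero_add_smul_rpow μ (by linarith),
      rpow_integral_norm_zero_add_smul_rpow μ (by linarith), abs_mul]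
    exact mul_le_of_le_one_right (abs_nonneg a) hr1
  · let e : sphere (0 : E) 1 := ⟨‖x‖⁻¹ • x, by simp [norm_smul, hx]⟩
    have hxe : x = ‖x‖ • (e : E) := by simp [e, smul_smul, hx]
    have hr2 : r ^ 2 * (q + Module.finrank ℝ E - 2) ≤ p + Module.finrank ℝ E - 2 := by
      rw [← sq_abs, ← le_div_iff₀ (by linarith)]
      exact (Real.le_sqrt (abs_nonneg r) (div_nonneg (by linarith) (by linarith))).1 hr
    rw [hxe]
    refine hμ.rpow_integral_norm_smul_add_smul_le hE e (norm_pos_iff.2 hx) hp hpq ?_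
    linear_combination a ^ 2 * hr2

theorem stmt_13 (n : ℕ) (hn : 2 ≤ n) (p q : ℝ) (hp : 6 ≤ p) (hpq : p ≤ q) (r : ℝ)
    (hr : |r| ≤ Real.sqrt ((p + (n : ℝ) - 2) / (q + (n : ℝ) - 2)))
    (x : EuclideanSpace ℝ (Fin n)) (a : ℝ) :
    (∫ y : sphere (0 : EuclideanSpace ℝ (Fin n)) 1,
        ‖x + (a * r) • (y : EuclideanSpace ℝ (Fin n))‖ ^ q ∂(sphereHaar n)) ^ (1 / q) ≤
      (∫ y : sphere (0 : EuclideanSpace ℝ (Fin n)) 1,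
        ‖x + a • (y : EuclideanSpace ℝ (Fin n))‖ ^ p ∂(sphereHaar n)) ^ (1 / p) := by
  have : NeZero n := ⟨by omega⟩
  exact stmt_13_general (isRotationInvariant_sphereHaar n) (by simpa) (by linarith) hpq
    (by simpa using hr) x a
end
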